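/- For all 0 < ε, δ ≤ 1 there exists C > 0 such that, for p ≥ C log n / n, the binomial random graph G = G_{n,p} asymptotically almost surely satisfies the following: for every H ∈ H^{2ε}_{n,p}(G), the graph G ∖ H contains a subgraph with at most δn²p edges that satisfies property RE(1/2 + ε/4). -/

import Mathlib

/-!
The sparse subgraph is a random one. Let `Q ~ G_{n,δ}` be independent of `G = G_{n,p}`; then
`G ⊓ Q ~ G_{n,r}` with `r = pδ`, and the claim is shown for `R = (G ∖ H) ⊓ Q`.

*Deterministic part.* The structure `Good` collects what is needed of `R`: a Pósa-type condition
(at most `s` vertices have degree below `r(s + εn)`, for all `s ≤ n/2`), expansion of small sets,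
and, for every family of pairs `{(x, y) : ℓ y ∈ Z x}` given by a labelling `ℓ` of the vertices
with `O(log n)` labels and a set `Z x` of labels for each vertex, at most `γn²r` edges more than
expected. `Good.re` derives `RE(1/2 + ε/4)` from this. Suppose that `R ∪ P` has no path longer
than `P`. Under Pósa rotations with one fixed end, the set of reachable heads doubles in each
round while it is small (`card_nbr_heads_le`), so it has linear size after `O(log n)` rounds. For
the later rounds, `P` is cut into `k = O(log n)` blocks. A rotated path traverses all but
`O(log n)` of the blocks contiguously, forwards or backwards, so the neighbourhoods of all heads
are described by labels that record the block of a vertex and whether its predecessor or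
successor on `P` is a new head (`exists_labelling`). Counting edges between heads and their
neighbourhoods, the degree condition forces the next set of heads to be larger by `εn/2`, until
there are more than `(1/2 + ε/4)n` of them (`Good.card_heads`). Reversing each of the resulting
paths and rotating its other end gives the sets `T v`.

*Probabilistic part.* The upper bounds on numbers of edges are monotone, so they need to hold only
for `G ⊓ Q`, independently of `H`. There are only `exp(O(n log n))` label families, so a
Chernoff bound with a union bound suffices when `rn ≥ δC log n`. By Markov's inequality, a.a.s. `G`
is such that these bounds fail with probability less than `1/2` over `Q`. For such a `G`, whose
degrees are also about `np` from below, fix `H`. All degrees in `G ∖ H` are at least `εnp`, and so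
with probability more than `1/2` over `Q` every degree of `R` is at least about `δ` times the degree in
`G ∖ H`. Hence some `Q` satisfies all requirements (`prob_bound`). This avoids a union
bound over the subgraphs `H`.
-/

open Filter Real

namespace Resilience

variable {V : Type*}

/-- The degree of a vertex, as the cardinality of its neighbourhood. -/
noncomputable def deg (G : SimpleGraph V) (v : V) : ℕ := (G.neighborSet v).ncard

/-- The neighbourhood of a set of vertices: all vertices with a neighbour in `X`. -/
def nbhd (G : SimpleGraph V) (X : Set V) : Set V := {v | ∃ x ∈ X, G.Adj v x}

/-- The minimum degree over a set of vertices. -/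
noncomputable def minDeg (G : SimpleGraph V) (X : Set V) : ℕ :=
  sInf ((fun v => deg G v) '' X)

/-- The number of edges of `G` with one endpoint in `X` and the other in `Y`. -/
noncomputable def eBetween (G : SimpleGraph V) (X Y : Set V) : ℕ :=
  {e ∈ G.edgeSet | ∃ x ∈ X, ∃ y ∈ Y, e = s(x, y)}.ncard

/-- The number of edges of `G` with both endpoints in `A`. -/
noncomputable def eIn (G : SimpleGraph V) (A : Set V) : ℕ :=
  {e ∈ G.edgeSet | ∀ v ∈ e, v ∈ A}.ncard

/-- The graph on `V` whose edges are the consecutive pairs of the list `l`;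
this lets us view a path, recorded as a list of distinct vertices, as a graph. -/
def listGraph (l : List V) : SimpleGraph V :=
  SimpleGraph.fromEdgeSet {e | ∃ q ∈ l.zip l.tail, e = s(q.1, q.2)}

/-- `l` is a (nonempty) path on `V` all of whose edges lie in `G`. -/
def IsPathOn (G : SimpleGraph V) (l : List V) : Prop :=
  l ≠ [] ∧ l.Nodup ∧ l.Chain' G.Adj

/-- `l` is a longest path with all edges in `G`. -/
def IsLongestPathOn (G : SimpleGraph V) (l : List V) : Prop :=
  IsPathOn G l ∧ ∀ l' : List V, IsPathOn G l' → l'.length ≤ l.length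

/-- `l'` is obtained from the path `l` (with fixed last endpoint) by a single rotation
within `G`, whose broken edge lies on the original path `P`.  Writing
`l = a :: t₁ ++ c :: b :: t₂`, the pivot is `b`, the new edge is `ab ∈ G`, the broken
edge is `cb` (an edge of `P`), and the rotated path is `(a :: t₁ ++ [c]).reverse ++ b :: t₂`. -/
def IsRotation (G : SimpleGraph V) (P l l' : List V) : Prop :=
  ∃ (a c b : V) (t₁ t₂ : List V),
    l = a :: t₁ ++ c :: b :: t₂ ∧ G.Adj a b ∧ (listGraph P).Adj c b ∧
    l' = (a :: t₁ ++ [c]).reverse ++ b :: t₂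

/-- The set of paths obtainable from `P` by at most `t` successive rotations within `G`
with fixed last endpoint, all broken edges lying on `P`. -/
def rotSet (G : SimpleGraph V) (P : List V) : ℕ → Set (List V)
  | 0 => {P}
  | t + 1 => rotSet G P t ∪ {l' | ∃ l ∈ rotSet G P t, IsRotation G P l l'}

/-- `R^t_{G,P,u}`: the set of endpoints of paths obtainable from `P` by at most `t`
successive rotations within `G` with fixed last endpoint. -/
def Rset (G : SimpleGraph V) (P : List V) (t : ℕ) : Set V :=
  {x | ∃ l ∈ rotSet G P t, l.head? = some x}

/-- The family `H^ε_{n,p}` of Pósa-type subgraphs: there is an ordering of the vertices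
with non-increasing degrees such that `d_H(v_i) ≤ (n-i)p - εnp` for all `i < n/2`
(1-based indexing). -/
def PosaFamily (n : ℕ) (p ε : ℝ) (H : SimpleGraph (Fin n)) : Prop :=
  ∃ v : Fin n → Fin n, Function.Bijective v ∧
    (∀ i j : Fin n, i ≤ j → deg H (v j) ≤ deg H (v i)) ∧
    ∀ i : Fin n, ((i.1 : ℝ) + 1) < n / 2 →
      (deg H (v i) : ℝ) ≤ ((n : ℝ) - ((i.1 : ℝ) + 1)) * p - ε * n * p

/-- The family `H^{ε,δ}_{n,p}` of (shifted) Chvátal-type subgraphs, where the shift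
`δn` is recorded as a natural number `s`: there is an ordering of the vertices with
non-increasing degrees such that for all `i < n/2` (1-based indexing), either
`d_H(v_i) ≤ (n-i)p - εnp` or `d_H(v_{n-i-s}) ≤ ip - εnp`. -/
def ChvatalFamily (n : ℕ) (p ε : ℝ) (s : ℕ) (H : SimpleGraph (Fin n)) : Prop :=
  ∃ v : Fin n → Fin n, Function.Bijective v ∧
    (∀ i j : Fin n, i ≤ j → deg H (v j) ≤ deg H (v i)) ∧
    ∀ i : Fin n, ((i.1 : ℝ) + 1) < n / 2 →
      ((deg H (v i) : ℝ) ≤ ((n : ℝ) - ((i.1 : ℝ) + 1)) * p - ε * n * p ∨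
       (deg H (v ⟨n - (i.1 + 1) - s - 1, by have := i.2; omega⟩) : ℝ) ≤
         ((i.1 : ℝ) + 1) * p - ε * n * p)

/-- The probability weight of a fixed graph `G` in the binomial random graph `G_{n,p}`. -/
noncomputable def weight (n : ℕ) (p : ℝ) (G : SimpleGraph (Fin n)) : ℝ :=
  p ^ G.edgeSet.ncard * (1 - p) ^ (n.choose 2 - G.edgeSet.ncard)

open Classical in
/-- The probability that the binomial random graph `G_{n,p}` satisfies the property `Q`. -/
noncomputable def Pr (n : ℕ) (p : ℝ) (Q : SimpleGraph (Fin n) → Prop) : ℝ :=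
  ∑ G : SimpleGraph (Fin n), if Q G then weight n p G else 0

/-- Property `RE(δ)` for a (connected) graph `G` on `n` vertices: for every path `P`
on the vertex set, either `G ∪ P` has a longer path, or there are at least `δn` vertices
`v`, each with a set `T v` of at least `δn` vertices `w`, such that `G ∪ P` has a path
from `v` to `w` with the same vertex set as `P`. -/
def RE (n : ℕ) (δ : ℝ) (G : SimpleGraph (Fin n)) : Prop :=
  G.Connected ∧
  ∀ P : List (Fin n), P ≠ [] → P.Nodup →
    (∃ Q : List (Fin n), IsPathOn (G ⊔ listGraph P) Q ∧ P.length < Q.length) ∨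
    (∃ S : Set (Fin n), δ * n ≤ S.ncard ∧
      ∃ T : Fin n → Set (Fin n), (∀ v ∈ S, δ * n ≤ (T v).ncard) ∧
        ∀ v ∈ S, ∀ w ∈ T v, ∃ Q : List (Fin n),
          IsPathOn (G ⊔ listGraph P) Q ∧ Q.head? = some v ∧ Q.getLast? = some w ∧
          Q.toFinset = P.toFinset)

/-- `G₂` complements `G₁` (with respect to parameter `δ` as in `RE(δ)`): for every path
`P` on the vertex set, either `G₁ ∪ P` has a longer path, or there are sets `S`, `T v`
as in the definition of `RE(δ)` together with `v ∈ S` and `w ∈ T v` such that `vw` is an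
edge of `G₁ ∪ G₂`. -/
def Complements (n : ℕ) (δ : ℝ) (G₁ G₂ : SimpleGraph (Fin n)) : Prop :=
  ∀ P : List (Fin n), P ≠ [] → P.Nodup →
    (∃ Q : List (Fin n), IsPathOn (G₁ ⊔ listGraph P) Q ∧ P.length < Q.length) ∨
    (∃ S : Set (Fin n), δ * n ≤ S.ncard ∧
      ∃ T : Fin n → Set (Fin n), (∀ v ∈ S, δ * n ≤ (T v).ncard) ∧
        (∀ v ∈ S, ∀ w ∈ T v, ∃ Q : List (Fin n),
          IsPathOn (G₁ ⊔ listGraph P) Q ∧ Q.head? = some v ∧ Q.getLast? = some w ∧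
          Q.toFinset = P.toFinset) ∧
        ∃ v ∈ S, ∃ w ∈ T v, (G₁ ⊔ G₂).Adj v w)

/-! ### Rotations of a path -/

/-- `Rot G P Q D`: the list `Q` arises from the path `P` by successive Pósa rotations along
edges of `G` that keep the last vertex fixed; `D` lists the heads created on the way (the
most recent one first), so `D.length` is the number of rotations.  A rotation turns
`A ++ b :: B`, where the head `a` of `A` is adjacent to `b`, into `A.reverse ++ b :: B`; it
breaks the edge `cb`, where `c` is the last vertex of `A` and the new head. -/
inductive Rot (G : SimpleGraph V) (P : List V) : List V → List V → Prop
  | base : Rot G P P []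
  | step {A B D : List V} {a b c : V} : Rot G P (A ++ b :: B) D → A.head? = some a →
      A.getLast? = some c → G.Adj a b → Rot G P (A.reverse ++ b :: B) (c :: D)

theorem Rot.perm {G : SimpleGraph V} {P Q D : List V} (h : Rot G P Q D) : Q.Perm P := by
  induction h with
  | base => exact List.Perm.refl _
  | step _ _ _ _ ih => exact ((List.reverse_perm _).append_right _).trans ih

theorem Rot.getLast? {G : SimpleGraph V} {P Q D : List V} (h : Rot G P Q D) :
    Q.getLast? = P.getLast? := by
  induction h with
  | base => rfl
  | step _ _ _ _ ih =>
    rw [← ih, List.getLast?_append_of_ne_nil _ (by simp), List.getLast?_append_of_ne_nil _ (by simp)]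

theorem listGraph_adj_getElem {P : List V} (hP : P.Nodup) (i : ℕ) (hi : i + 1 < P.length) :
    (listGraph P).Adj P[i] P[i + 1] := by
  rw [listGraph, SimpleGraph.fromEdgeSet_adj]
  refine ⟨⟨(P[i], P[i+1]), ?_, rfl⟩, ?_⟩
  · rw [List.mem_iff_getElem]
    exact ⟨i, by simp; omega, by simp⟩
  · intro h
    have := (hP.getElem_inj_iff).1 h
    omega

theorem isChain_listGraph {P : List V} (hP : P.Nodup) : P.IsChain (listGraph P).Adj := by
  rw [List.isChain_iff_getElem]
  exact fun i hi => listGraph_adj_getElem hP i hi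

theorem listGraph_le {P : List V} {G : SimpleGraph V} (h : P.IsChain G.Adj) :
    listGraph P ≤ G := by
  intro x y hxy
  rw [listGraph, SimpleGraph.fromEdgeSet_adj] at hxy
  obtain ⟨⟨q, hq, he⟩, -⟩ := hxy
  rw [List.mem_iff_getElem] at hq
  obtain ⟨i, hi, rfl⟩ := hq
  rw [List.isChain_iff_getElem] at h
  have h1 : i + 1 < P.length := by simp at hi; omega
  have h2 := h i h1
  simp only [List.getElem_zip, List.getElem_tail] at he
  rcases Sym2.eq_iff.1 he with ⟨rfl, rfl⟩ | ⟨rfl, rfl⟩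
  · exact h2
  · exact h2.symm

theorem Rot.isChain {G : SimpleGraph V} {P Q D : List V} (hP : P.Nodup) (h : Rot G P Q D) :
    Q.IsChain (G ⊔ listGraph P).Adj := by
  induction h with
  | base => exact (isChain_listGraph hP).imp (fun _ _ h => Or.inr h)
  | @step A B D a b c _ hA hc hab ih =>
    rw [List.isChain_append] at ih
    refine List.IsChain.append ?_ ih.2.1 ?_
    · rw [List.isChain_reverse]
      exact ih.1.imp (fun _ _ h => h.symm)
    · intro x hx y hy
      rw [List.getLast?_reverse, hA] at hx
      simp at hx hy
      subst hx hy
      exact Or.inl hab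

/-- A segment of `P` avoiding all heads created by the rotations is never cut, so it is still
traversed contiguously, possibly backwards. -/
theorem Rot.infix {G : SimpleGraph V} {P Q D : List V} (h : Rot G P Q D) (I : List V)
    (hI : I <:+: P) (hD : ∀ d ∈ D, d ∉ I) : I <:+: Q ∨ I.reverse <:+: Q := by
  induction h with
  | base => exact Or.inl hI
  | @step A B D a b c _ hA hc hab ih =>
    have key : ∀ J : List V, c ∉ J → J <:+: A ++ b :: B →
        J <:+: A.reverse ++ b :: B ∨ J.reverse <:+: A.reverse ++ b :: B := by
      intro J hcJ hJ
      rcases List.infix_append_iff_ne_nil.1 hJ with h | h | ⟨l₁, l₂, h1, -, rfl, h2, -⟩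
      · exact Or.inr ((List.reverse_infix.2 h).trans List.infix_append_left)
      · exact Or.inl (h.trans List.infix_append_right)
      · exfalso
        apply hcJ
        obtain ⟨s, rfl⟩ := h2
        rw [List.getLast?_append_of_ne_nil _ h1] at hc
        exact List.mem_append_left _ (List.mem_of_getLast? hc)
    have hcI : c ∉ I := hD c (by simp)
    rcases ih (fun d hd => hD d (by simp [hd])) with h | h
    · exact key I hcI h
    · have := key I.reverse (by simpa using hcI) h
      rw [List.reverse_reverse] at this
      exact this.symm

open Classical in
/-- The heads of the paths obtained from `P` by at most `t` rotations. -/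
noncomputable def heads [Fintype V] (G : SimpleGraph V) (P : List V) (t : ℕ) : Finset V :=
  Finset.univ.filter fun x => ∃ Q D, Rot G P Q D ∧ D.length ≤ t ∧ Q.head? = some x

theorem mem_heads [Fintype V] {G : SimpleGraph V} {P : List V} {t : ℕ} {x : V} :
    x ∈ heads G P t ↔ ∃ Q D, Rot G P Q D ∧ D.length ≤ t ∧ Q.head? = some x := by
  simp [heads]

theorem heads_mono [Fintype V] {G : SimpleGraph V} {P : List V} {s t : ℕ} (h : s ≤ t) :
    heads G P s ⊆ heads G P t := by
  intro x
  simp only [mem_heads]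
  rintro ⟨Q, D, h1, h2, h3⟩
  exact ⟨Q, D, h1, h2.trans h, h3⟩

theorem Rot.mem_heads_of_mem [Fintype V] {G : SimpleGraph V} {P Q D : List V}
    (h : Rot G P Q D) {d : V} (hd : d ∈ D) : d ∈ heads G P D.length := by
  induction h with
  | base => simp at hd
  | @step A B D a b c hr hA hc hab ih =>
    rcases List.mem_cons.1 hd with rfl | hd
    · refine mem_heads.2 ⟨_, _, Rot.step hr hA hc hab, le_rfl, ?_⟩
      simp [List.head?_append, hc]
    · exact heads_mono (by simp) (ih hd)

/-- If the head `x` of `Q` is adjacent to `y`, the predecessor of `y` on `Q` is a head after one more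
rotation. -/
theorem Rot.mem_heads_of_infix [Fintype V] {G : SimpleGraph V} {P Q D : List V}
    (h : Rot G P Q D) {x y c : V} {t : ℕ} (ht : D.length ≤ t) (hx : Q.head? = some x)
    (hxy : G.Adj x y) (hc : [c, y] <:+: Q) : c ∈ heads G P (t + 1) := by
  obtain ⟨s, u, rfl⟩ := hc
  have e : s ++ [c, y] ++ u = (s ++ [c]) ++ y :: u := by simp
  rw [e] at h hx
  have hx' : (s ++ [c]).head? = some x := by
    rw [List.head?_append_of_ne_nil] at hx
    · exact hx
    · simp
  have := Rot.step (c := c) h hx' (by simp) hxy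
  refine mem_heads.2 ⟨_, _, this, by simpa using ht, by simp⟩

/-! ### Growth of the set of heads -/

/-- If `G ∪ P` has no path longer than `P`, all neighbours of a head lie on `P`. -/
theorem Rot.mem_path {G : SimpleGraph V} {P Q D : List V} (hP : P.Nodup)
    (hmax : ∀ Q, IsPathOn (G ⊔ listGraph P) Q → Q.length ≤ P.length) (h : Rot G P Q D)
    {x y : V} (hx : Q.head? = some x) (hxy : G.Adj x y) : y ∈ P := by
  by_contra hy
  have hy' : y ∉ Q := fun h' => hy (h.perm.mem_iff.1 h')
  have := hmax (y :: Q) ⟨by simp, List.nodup_cons.2 ⟨hy', h.perm.nodup_iff.2 hP⟩, by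
    refine List.isChain_cons.2 ⟨?_, h.isChain hP⟩
    intro z hz
    rw [hx] at hz
    obtain rfl : x = z := by simpa using hz
    exact Or.inl hxy.symm⟩
  have := h.perm.length_eq
  simp at *
  omega

theorem pair_infix_take_drop {P : List V} {a L i : ℕ} (h1 : a ≤ i) (h2 : i + 1 < a + L)
    (h3 : i + 1 < P.length) : [P[i], P[i + 1]] <:+: (P.drop a).take L := by
  have : [P[i], P[i + 1]] = (((P.drop a).take L).drop (i - a)).take 2 := by
    apply List.ext_getElem
    · simp; omega
    · intro j hj _
      simp only [List.length_cons, List.length_nil] at hj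
      simp only [List.getElem_take, List.getElem_drop]
      interval_cases j <;> simp <;> congr 1 <;> omega
  rw [this]
  exact (List.take_prefix _ _).isInfix.trans (List.drop_suffix _ _).isInfix

theorem take_drop_infix (P : List V) (a L : ℕ) : (P.drop a).take L <:+: P :=
  (List.take_prefix _ _).isInfix.trans (List.drop_suffix _ _).isInfix

theorem triple_infix {P : List V} {i : ℕ} (h3 : i + 2 < P.length) :
    [P[i], P[i + 1], P[i + 2]] <:+: P := by
  have : [P[i], P[i + 1], P[i + 2]] = (P.drop i).take 3 := by
    apply List.ext_getElem
    · simp; omega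
    · intro j hj _
      simp only [List.length_cons, List.length_nil] at hj
      simp only [List.getElem_take, List.getElem_drop]
      interval_cases j <;> simp
  rw [this]
  exact take_drop_infix _ _ _

section
variable [Fintype V] [DecidableEq V]

open Classical in
/-- The set of vertices with a neighbour in `X`, as a finset. -/
noncomputable def nbr (G : SimpleGraph V) (X : Finset V) : Finset V :=
  Finset.univ.filter fun y => ∃ x ∈ X, G.Adj x y

/-- Pósa's observation: a neighbour `y` of a head has one of itself, its predecessor or its
successor on `P` among the heads available one rotation later.  The last vertex of `P` is
the exception accounted for by the `+ 1`. -/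
theorem card_nbr_heads_le {G : SimpleGraph V} {P : List V} (hP : P.Nodup) (hP0 : P ≠ [])
    (hmax : ∀ Q, IsPathOn (G ⊔ listGraph P) Q → Q.length ≤ P.length) (t : ℕ) :
    (nbr G (heads G P t)).card ≤ 3 * (heads G P (t + 1)).card + 1 := by
  set S := heads G P (t + 1) with hS
  have hlen : 0 < P.length := List.length_pos_iff.2 hP0
  have hsub : nbr G (heads G P t) ⊆ S ∪ S.image (fun z => P.getD (P.idxOf z + 1) z) ∪
      S.image (fun z => P.getD (P.idxOf z - 1) z) ∪ {P[P.length - 1]} := by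
    intro y hy
    simp only [nbr, Finset.mem_filter, Finset.mem_univ, true_and] at hy
    obtain ⟨x, hx, hxy⟩ := hy
    obtain ⟨Q, D, hr, hD, hQ⟩ := mem_heads.1 hx
    have hyP := hr.mem_path hP hmax hQ hxy
    obtain ⟨i, hi, rfl⟩ := List.mem_iff_getElem.1 hyP
    simp only [Finset.mem_union, Finset.mem_image, Finset.mem_singleton]
    rcases Nat.eq_zero_or_pos i with rfl | hi0
    · left; left; left
      refine mem_heads.2 ⟨P, [], Rot.base, by simp, ?_⟩
      rw [List.head?_eq_getElem?, List.getElem?_eq_getElem]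
    by_cases hil : i = P.length - 1
    · right; subst hil; rfl
    left
    obtain ⟨j, rfl⟩ : ∃ j, i = j + 1 := ⟨i - 1, by omega⟩
    have hj : j + 2 < P.length := by omega
    have hDS : ∀ d ∈ D, d ∈ S := fun d hd =>
      heads_mono (by omega) (hr.mem_heads_of_mem hd)
    have hc : P[j] ∈ S → ∃ a ∈ S, P.getD (P.idxOf a + 1) a = P[j+1] := by
      intro h
      refine ⟨P[j], h, ?_⟩
      rw [hP.idxOf_getElem, List.getD_eq_getElem]
    have he : P[j+2] ∈ S → ∃ a ∈ S, P.getD (P.idxOf a - 1) a = P[j+1] := by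
      intro h
      refine ⟨P[j+2], h, ?_⟩
      rw [hP.idxOf_getElem]
      simp only [Nat.add_succ_sub_one]
      rw [List.getD_eq_getElem]
    by_cases hdis : ∀ d ∈ D, d ∉ [P[j], P[j+1], P[j+2]]
    · rcases hr.infix _ (triple_infix hj) hdis with h | h
      · left; right
        refine hc (hr.mem_heads_of_infix hD hQ hxy (List.IsInfix.trans ?_ h))
        exact ⟨[], [P[j+2]], by simp⟩
      · right
        refine he (hr.mem_heads_of_infix hD hQ hxy (List.IsInfix.trans ?_ h))
        exact ⟨[], [P[j]], by simp⟩
    · push Not at hdis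
      obtain ⟨d, hd, hd'⟩ := hdis
      have hdS := hDS d hd
      simp only [List.mem_cons, List.not_mem_nil, or_false] at hd'
      rcases hd' with rfl | rfl | rfl
      · left; right; exact hc hdS
      · left; left; exact hdS
      · right; exact he hdS
  refine (Finset.card_le_card hsub).trans ?_
  refine (Finset.card_union_le _ _).trans ?_
  have h1 := Finset.card_union_le (S ∪ S.image (fun z => P.getD (P.idxOf z + 1) z))
      (S.image (fun z => P.getD (P.idxOf z - 1) z))
  have h2 := Finset.card_union_le S (S.image (fun z => P.getD (P.idxOf z + 1) z))
  have h3 := Finset.card_image_le (s := S) (f := (fun z => P.getD (P.idxOf z + 1) z))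
  have h4 := Finset.card_image_le (s := S) (f := (fun z => P.getD (P.idxOf z - 1) z))
  simp only [Finset.card_singleton]
  omega

end

section
variable [Fintype V] [DecidableEq V]

/-! ### Encoding the neighbourhoods of heads by block labels -/

theorem add_one_div_of_mod_ne {i L : ℕ} (h : (i + 1) % L ≠ 0) : (i + 1) / L = i / L := by
  rw [Nat.succ_div, if_neg (fun hd => h (Nat.mod_eq_zero_of_dvd hd)), add_zero]

theorem sub_one_div_of_mod_ne {i L : ℕ} (h : i % L ≠ 0) :
    (i - 1) / L = i / L ∧ i - 1 + 1 = i := by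
  have hi : i ≠ 0 := by rintro rfl; simp at h
  obtain ⟨j, rfl⟩ := Nat.exists_eq_succ_of_ne_zero hi
  exact ⟨(add_one_div_of_mod_ne h).symm, rfl⟩

/-- Cut `P` into consecutive blocks of length `L`.  A rotated path traverses all but at most
`t` blocks contiguously, forwards or backwards, and then the neighbour of a head determines
the new head as its predecessor or successor on `P`.  Hence all neighbourhoods of heads are
described by one labelling `ℓ` of the vertices by `O(k)` labels, each head `x` selecting a set
`Z x` of labels, and each described set is not much larger than the next set of heads. -/
theorem exists_labelling {G : SimpleGraph V} {P : List V} (hP : P.Nodup) (hP0 : P ≠ [])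
    (hmax : ∀ Q, IsPathOn (G ⊔ listGraph P) Q → Q.length ≤ P.length) (t L k : ℕ)
    (hL : 0 < L) (hk : P.length ≤ k * L) :
    ∃ (ℓ : V → Option (Fin k × Bool × Bool)) (Z : V → Finset (Option (Fin k × Bool × Bool))),
      (∀ x ∈ heads G P t, ∀ y, G.Adj x y → ℓ y ∈ Z x) ∧
      ∀ x ∈ heads G P t, (Finset.univ.filter fun y => ℓ y ∈ Z x).card ≤
        (heads G P (t + 1)).card + 2 * k + 1 + t * L := by
  classical
  have hlen : 0 < P.length := List.length_pos_iff.2 hP0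
  set T := heads G P (t + 1) with hT
  -- If the block of position `i` is traversed forwards, a neighbour of a head at position `i` gives
  -- the new head at `i - 1`, unless `i` starts a block; this is `a1 i`. Similarly `a2 i` holds for
  -- backward traversals, with the new head at `i + 1`.
  set a1 : ℕ → Prop := fun i => i % L = 0 ∨ P.getD (i - 1) P[0] ∈ T with ha1
  set a2 : ℕ → Prop := fun i => (i + 1) % L = 0 ∨ i + 1 = P.length ∨ P.getD (i + 1) P[0] ∈ T
    with ha2
  have hblk : ∀ i, i < P.length → i / L < k := fun i hi =>
    (Nat.div_lt_iff_lt_mul hL).2 (lt_of_lt_of_le hi hk)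
  set blk : ℕ → List V := fun j => (P.drop (j * L)).take L with hblkdef
  -- `ok j b1 b2 Q`: vertices of block `j` with flags `b1`, `b2` may be neighbours of the head of `Q`;
  -- nothing is required if `Q` cuts the block.
  set ok : ℕ → Bool → Bool → List V → Prop := fun j b1 b2 Q =>
    (blk j <:+: Q ∧ b1 = true) ∨ (¬ blk j <:+: Q ∧ (blk j).reverse <:+: Q ∧ b2 = true) ∨
      (¬ blk j <:+: Q ∧ ¬ (blk j).reverse <:+: Q) with hok
  have hch : ∀ x, ∃ Q D : List V, x ∈ heads G P t →
      (Rot G P Q D ∧ D.length ≤ t ∧ Q.head? = some x) := by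
    intro x
    by_cases hx : x ∈ heads G P t
    · obtain ⟨Q, D, h⟩ := mem_heads.1 hx
      exact ⟨Q, D, fun _ => h⟩
    · exact ⟨[], [], fun h => absurd h hx⟩
  choose Q D hQD using hch
  let ℓ : V → Option (Fin k × Bool × Bool) := fun y =>
    if h : y ∈ P then some (⟨P.idxOf y / L, hblk _ (List.idxOf_lt_length_iff.2 h)⟩,
      decide (a1 (P.idxOf y)), decide (a2 (P.idxOf y))) else none
  let Z : V → Finset (Option (Fin k × Bool × Bool)) := fun x =>
    Finset.univ.filter fun o => ∃ (j : Fin k) (b1 b2 : Bool), o = some (j, b1, b2) ∧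
      ok j b1 b2 (Q x)
  have hmem : ∀ x y, ℓ y ∈ Z x ↔ y ∈ P ∧
      ok (P.idxOf y / L) (decide (a1 (P.idxOf y))) (decide (a2 (P.idxOf y))) (Q x) := by
    intro x y
    simp only [ℓ, Z, Finset.mem_filter, Finset.mem_univ, true_and]
    by_cases hy : y ∈ P
    · simp only [hy, dif_pos, true_and]
      constructor
      · rintro ⟨j, b1, b2, h, h'⟩
        simp only [Option.some.injEq, Prod.mk.injEq] at h
        obtain ⟨rfl, rfl, rfl⟩ := h
        exact h'
      · intro h
        exact ⟨_, _, _, rfl, h⟩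
    · simp [hy]
  refine ⟨ℓ, Z, ?_, ?_⟩
  · intro x hx y hxy
    obtain ⟨hr, hD, hQ⟩ := hQD x hx
    rw [hmem]
    have hyP := hr.mem_path hP hmax hQ hxy
    refine ⟨hyP, ?_⟩
    obtain ⟨i, hi, rfl⟩ := List.mem_iff_getElem.1 hyP
    rw [hP.idxOf_getElem]
    simp only [hok, decide_eq_true_eq]
    have hle : i / L * L ≤ i := Nat.div_mul_le_self i L
    have hlt : i < i / L * L + L := by
      have := Nat.lt_div_mul_add (a := i) hL
      omega
    by_cases hp : blk (i / L) <:+: Q x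
    · left
      refine ⟨hp, ?_⟩
      by_cases h0 : i % L = 0
      · exact Or.inl h0
      right
      have h1 : i - 1 + 1 = i := (sub_one_div_of_mod_ne h0).2
      have h2 : i / L * L ≤ i - 1 := by
        rw [← (sub_one_div_of_mod_ne h0).1]; exact Nat.div_mul_le_self _ L
      rw [List.getD_eq_getElem _ _ (by omega)]
      have h3 := pair_infix_take_drop (P := P) (L := L) h2 (by omega) (by omega)
      simp only [h1] at h3
      exact hr.mem_heads_of_infix hD hQ hxy (h3.trans hp)
    · right
      by_cases hm : (blk (i / L)).reverse <:+: Q x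
      · left
        refine ⟨hp, hm, ?_⟩
        by_cases h0 : (i + 1) % L = 0
        · exact Or.inl h0
        right
        by_cases hl : i + 1 = P.length
        · exact Or.inl hl
        right
        rw [List.getD_eq_getElem _ _ (by omega)]
        have h2 : i + 1 < i / L * L + L := by
          have h4 := Nat.lt_div_mul_add (a := i + 1) hL
          rw [add_one_div_of_mod_ne h0] at h4
          omega
        have h3 := pair_infix_take_drop (P := P) (L := L) hle h2 (by omega)
        have h5 := (List.reverse_infix.2 h3).trans hm
        exact hr.mem_heads_of_infix hD hQ hxy (by simpa using h5)
      · exact Or.inr ⟨hp, hm⟩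
  · intro x hx
    obtain ⟨hr, hD, hQ⟩ := hQD x hx
    -- `Y'` injects into the new heads; the other vertices with a label in `Z x` start a block (`B0`),
    -- end a block (`B1`), lie in a cut block (`BD`) or are the last vertex of `P`.
    set Y' : Finset V := Finset.univ.filter fun y => y ∈ P ∧
      ((blk (P.idxOf y / L) <:+: Q x ∧ P.idxOf y % L ≠ 0 ∧
          P.getD (P.idxOf y - 1) P[0] ∈ T) ∨
        (¬ blk (P.idxOf y / L) <:+: Q x ∧ (P.idxOf y + 1) % L ≠ 0 ∧ P.idxOf y + 1 < P.length ∧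
          P.getD (P.idxOf y + 1) P[0] ∈ T)) with hY'
    have hY'card : Y'.card ≤ T.card := by
      have gspec : ∀ y ∈ Y', ∃ c ∈ T, P.idxOf c / L = P.idxOf y / L ∧
          (blk (P.idxOf y / L) <:+: Q x → P.idxOf y = P.idxOf c + 1) ∧
          (¬ blk (P.idxOf y / L) <:+: Q x → P.idxOf y + 1 = P.idxOf c) := by
        intro y hy
        simp only [hY', Finset.mem_filter, Finset.mem_univ, true_and] at hy
        obtain ⟨hyP, ⟨h1, h2, h3⟩ | ⟨h1, h2, h3, h4⟩⟩ := hy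
        · have hi := List.idxOf_lt_length_iff.2 hyP
          have := sub_one_div_of_mod_ne h2
          refine ⟨_, h3, ?_⟩
          rw [List.getD_eq_getElem _ _ (by omega), hP.idxOf_getElem]
          exact ⟨this.1, fun _ => this.2.symm, fun h => absurd h1 h⟩
        · refine ⟨_, h4, ?_⟩
          rw [List.getD_eq_getElem _ _ (by omega), hP.idxOf_getElem]
          exact ⟨add_one_div_of_mod_ne h2, fun h => absurd h h1, fun _ => rfl⟩
      choose! g hg1 hg2 hg3 hg4 using gspec
      refine Finset.card_le_card_of_injOn g hg1 ?_
      intro y hy z hz hyz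
      have e : P.idxOf y / L = P.idxOf z / L := by
        rw [← hg2 y hy, ← hg2 z hz, hyz]
      have hidx : P.idxOf y = P.idxOf z := by
        by_cases hs : blk (P.idxOf y / L) <:+: Q x
        · rw [hg3 y hy hs, hg3 z hz (e ▸ hs), hyz]
        · have h1 := hg4 y hy hs
          have h2 := hg4 z hz (e ▸ hs)
          rw [hyz] at h1
          omega
      have hyP : y ∈ P := (Finset.mem_filter.1 hy).2.1
      exact (List.idxOf_inj hyP).1 hidx
    set B0 := (Finset.range k).image fun j => P.getD (j * L) P[0]
    set B1 := (Finset.range k).image fun j => P.getD (j * L + (L - 1)) P[0]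
    set BD := ((D x).toFinset ×ˢ Finset.range L).image fun z =>
      P.getD (P.idxOf z.1 / L * L + z.2) P[0]
    have hsub : (Finset.univ.filter fun y => ℓ y ∈ Z x) ⊆
        Y' ∪ B0 ∪ B1 ∪ BD ∪ {P[P.length - 1]} := by
      intro y hy
      simp only [Finset.mem_filter, Finset.mem_univ, true_and] at hy
      rw [hmem] at hy
      obtain ⟨hyP, hy⟩ := hy
      obtain ⟨i, hi, rfl⟩ := List.mem_iff_getElem.1 hyP
      have hB0 : i % L = 0 → P[i] ∈ B0 := by
        intro h0
        refine Finset.mem_image.2 ⟨i / L, Finset.mem_range.2 (hblk i hi), ?_⟩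
        have : i / L * L = i := Nat.div_mul_cancel (Nat.dvd_of_mod_eq_zero h0)
        rw [this, List.getD_eq_getElem]
      have hB1 : (i + 1) % L = 0 → P[i] ∈ B1 := by
        intro h0
        refine Finset.mem_image.2 ⟨i / L, Finset.mem_range.2 (hblk i hi), ?_⟩
        have h1 : (i + 1) / L = i / L + 1 := by
          rw [Nat.succ_div, if_pos (Nat.dvd_of_mod_eq_zero h0)]
        have h2 : (i + 1) / L * L = i + 1 := Nat.div_mul_cancel (Nat.dvd_of_mod_eq_zero h0)
        rw [h1, Nat.add_mul] at h2
        have : i / L * L + (L - 1) = i := by omega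
        rw [this, List.getD_eq_getElem]
      have hY : (blk (i / L) <:+: Q x ∧ i % L ≠ 0 ∧ P.getD (i - 1) P[0] ∈ T) ∨
        (¬ blk (i / L) <:+: Q x ∧ (i + 1) % L ≠ 0 ∧ i + 1 < P.length ∧
          P.getD (i + 1) P[0] ∈ T) → P[i] ∈ Y' := by
        intro h
        simp only [hY', Finset.mem_filter, Finset.mem_univ, true_and, hP.idxOf_getElem]
        exact ⟨hyP, h⟩
      rw [hP.idxOf_getElem] at hy
      simp only [hok, decide_eq_true_eq] at hy
      simp only [Finset.mem_union, Finset.mem_singleton]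
      rcases hy with ⟨h1, h2⟩ | ⟨h1, h2, h3⟩ | ⟨h1, h2⟩
      · by_cases h0 : i % L = 0
        · exact Or.inl (Or.inl (Or.inl (Or.inr (hB0 h0))))
        · exact Or.inl (Or.inl (Or.inl (Or.inl
            (hY (Or.inl ⟨h1, h0, h2.resolve_left h0⟩)))))
      · by_cases h0 : (i + 1) % L = 0
        · exact Or.inl (Or.inl (Or.inr (hB1 h0)))
        by_cases hl : i + 1 = P.length
        · right
          have : i = P.length - 1 := by omega
          subst this; rfl
        · exact Or.inl (Or.inl (Or.inl (Or.inl (hY (Or.inr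
            ⟨h1, h0, by omega, (h3.resolve_left h0).resolve_left hl⟩)))))
      · left; right
        have : ¬ ∀ d ∈ D x, d ∉ blk (i / L) := by
          intro hd
          rcases hr.infix _ (take_drop_infix P (i / L * L) L) hd with h | h
          · exact h1 h
          · exact h2 h
        push Not at this
        obtain ⟨d, hd, hdb⟩ := this
        obtain ⟨s, hs, rfl⟩ := List.mem_iff_getElem.1 hdb
        have hs' : s < L ∧ i / L * L + s < P.length := by
          simp only [hblkdef, List.length_take, List.length_drop] at hs; omega
        simp only [hblkdef, List.getElem_take, List.getElem_drop] at hd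
        refine Finset.mem_image.2 ⟨(P[i / L * L + s], i % L), ?_, ?_⟩
        · simp only [Finset.mem_product, List.mem_toFinset, Finset.mem_range]
          exact ⟨hd, Nat.mod_lt _ hL⟩
        · rw [hP.idxOf_getElem]
          have e : (i / L * L + s) / L = i / L := by
            rw [mul_comm, Nat.mul_add_div hL, Nat.div_eq_of_lt hs'.1, add_zero]
          rw [e, Nat.div_add_mod' i L, List.getD_eq_getElem]
    refine (Finset.card_le_card hsub).trans ?_
    have c1 := Finset.card_union_le (Y' ∪ B0 ∪ B1 ∪ BD) {P[P.length - 1]}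
    have c2 := Finset.card_union_le (Y' ∪ B0 ∪ B1) BD
    have c3 := Finset.card_union_le (Y' ∪ B0) B1
    have c4 := Finset.card_union_le Y' B0
    have d0 : B0.card ≤ k := Finset.card_image_le.trans (by simp)
    have d1 : B1.card ≤ k := Finset.card_image_le.trans (by simp)
    have d2 : BD.card ≤ t * L := by
      refine Finset.card_image_le.trans ?_
      rw [Finset.card_product, Finset.card_range]
      exact Nat.mul_le_mul_right _ ((List.toFinset_card_le _).trans hD)
    rw [Finset.card_singleton] at c1
    omega

end

/-! ### Deterministic conditions that imply `RE` -/

open Classical in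
/-- The number of ordered pairs `(x, y)` with `A x y` that are edges of `G`. -/
noncomputable def adjPairs {n : ℕ} (G : SimpleGraph (Fin n)) (A : Fin n → Fin n → Prop) : ℕ :=
  (Finset.univ.filter fun z : Fin n × Fin n => G.Adj z.1 z.2 ∧ A z.1 z.2).card

open Classical in
/-- The number of ordered pairs `(x, y)` with `A x y`. -/
noncomputable def allPairs {n : ℕ} (A : Fin n → Fin n → Prop) : ℕ :=
  (Finset.univ.filter fun z : Fin n × Fin n => A z.1 z.2).card

open Classical in
theorem adjPairs_eq_sum {n : ℕ} (G : SimpleGraph (Fin n)) (A : Fin n → Fin n → Prop) :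
    adjPairs G A = ∑ x, (Finset.univ.filter fun y => G.Adj x y ∧ A x y).card := by
  simp only [adjPairs, Finset.card_filter]
  rw [← Finset.univ_product_univ, Finset.sum_product]

open Classical in
theorem allPairs_eq_sum {n : ℕ} (A : Fin n → Fin n → Prop) :
    allPairs A = ∑ x, (Finset.univ.filter fun y => A x y).card := by
  simp only [allPairs, Finset.card_filter]
  rw [← Finset.univ_product_univ, Finset.sum_product]

open Classical in
theorem deg_eq_card {n : ℕ} (G : SimpleGraph (Fin n)) (x : Fin n) :
    deg G x = (Finset.univ.filter fun y => G.Adj x y).card := by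
  rw [deg, ← Set.ncard_coe_finset]
  congr 1
  ext y
  simp

open Classical in
/-- The properties of a sparse graph used by the rotation argument, where `r` plays the role of
the edge density: a Pósa-type degree condition, absence of dense pairs `(X, Y)` with `X` small,
and an upper bound on the number of edges in families of pairs described by a labelling of
the vertices and a choice of labels for each vertex. -/
structure Good (n : ℕ) (r ε β γ : ℝ) (k : ℕ) (R : SimpleGraph (Fin n)) : Prop where
  degrees : ∀ s : ℝ, 0 ≤ s → s ≤ n / 2 →
    ((Finset.univ.filter fun v => (deg R v : ℝ) < r * (s + ε * n)).card : ℝ) ≤ s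
  small : ∀ X Y : Finset (Fin n), X.Nonempty → (X.card : ℝ) ≤ β * n → Y.card ≤ 7 * X.card →
    (adjPairs R (fun x y => x ∈ X ∧ y ∈ Y) : ℝ) < r * (ε * n) * X.card
  labels : ∀ (ℓ : Fin n → Option (Fin k × Bool × Bool))
    (Z : Fin n → Finset (Option (Fin k × Bool × Bool))),
    (adjPairs R (fun x y => ℓ y ∈ Z x) : ℝ) ≤
      r * allPairs (fun x y => ℓ y ∈ Z x) + γ * n ^ 2 * r

section
variable {n : ℕ} {r ε β γ : ℝ} {k : ℕ} {R : SimpleGraph (Fin n)}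

theorem Good.le_deg (h : Good n r ε β γ k R) (x : Fin n) : r * (ε * n) ≤ deg R x := by
  classical
  have h1 := h.degrees 0 le_rfl (by positivity)
  by_contra hx
  push Not at hx
  have : 0 < (Finset.univ.filter fun v => (deg R v : ℝ) < r * (0 + ε * n)).card :=
    Finset.card_pos.2 ⟨x, by simpa using hx⟩
  have : (0:ℝ) < (Finset.univ.filter fun v => (deg R v : ℝ) < r * (0 + ε * n)).card := by
    exact_mod_cast this
  linarith

theorem Good.card_nbr (h : Good n r ε β γ k R) {X : Finset (Fin n)} (hX : X.Nonempty)
    (hXβ : (X.card : ℝ) ≤ β * n) : 7 * X.card < (nbr R X).card := by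
  classical
  by_contra hle
  push Not at hle
  have h1 := h.small X (nbr R X) hX hXβ hle
  have h2 : ∑ x ∈ X, deg R x ≤ adjPairs R (fun x y => x ∈ X ∧ y ∈ nbr R X) := by
    rw [adjPairs_eq_sum]
    refine le_trans (Finset.sum_le_sum fun x hx => ?_) (Finset.sum_le_univ_sum_of_nonneg (s := X)
      fun x => Nat.zero_le _)
    rw [deg_eq_card]
    refine Finset.card_le_card fun y hy => ?_
    simp only [Finset.mem_filter, Finset.mem_univ, true_and, nbr] at hy ⊢
    exact ⟨hy, hx, x, hx, hy⟩
  have h3 : r * (ε * n) * X.card ≤ ∑ x ∈ X, (deg R x : ℝ) := by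
    rw [mul_comm, ← nsmul_eq_mul]
    exact Finset.card_nsmul_le_sum _ _ _ fun x _ => h.le_deg x
  have h4 : (∑ x ∈ X, (deg R x : ℝ)) ≤ adjPairs R (fun x y => x ∈ X ∧ y ∈ nbr R X) := by
    exact_mod_cast h2
  linarith

open Classical in
/-- Averaging: by the degree condition, a linear part of a set `S` consists of vertices of
degree about `r (|S| + εn)`, so sets covering the neighbourhoods and described by labels must
have size exceeding `|S|` by a linear amount. -/
theorem Good.le_of_cover (h : Good n r ε β γ k R) (hn : 0 < n) (hr : 0 < r) (hβ : 0 < β)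
    (hβε : β ≤ ε / 4) (hβ1 : β ≤ 1) (hγ : γ ≤ β * ε / 16) {S : Finset (Fin n)}
    (hS : β * n ≤ S.card) (ℓ : Fin n → Option (Fin k × Bool × Bool))
    (Z : Fin n → Finset (Option (Fin k × Bool × Bool))) {B : ℝ}
    (hcov : ∀ x ∈ S, ∀ y, R.Adj x y → ℓ y ∈ Z x)
    (hB : ∀ x ∈ S, ((Finset.univ.filter fun y => ℓ y ∈ Z x).card : ℝ) ≤ B) :
    min (S.card : ℝ) (n / 2) + 3 / 4 * ε * n ≤ B := by
  have hn' : (0:ℝ) < n := by exact_mod_cast hn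
  set s' : ℝ := min (S.card : ℝ) (n / 2) - β / 2 * n with hs'
  have hs0 : 0 ≤ s' := by
    have : β / 2 * n ≤ min (S.card : ℝ) (n / 2) := by
      apply le_min <;> nlinarith
    linarith
  have hs2 : s' ≤ n / 2 := by
    have := min_le_right (S.card : ℝ) (n / 2)
    have : 0 ≤ β / 2 * n := by positivity
    linarith
  have hdeg := h.degrees s' hs0 hs2
  set S' := S.filter fun v => r * (s' + ε * n) ≤ (deg R v : ℝ) with hS'
  have hcard : β / 2 * n ≤ S'.card := by
    have h1 : S.card ≤ S'.card +
        (Finset.univ.filter fun v => (deg R v : ℝ) < r * (s' + ε * n)).card := by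
      rw [← Finset.card_filter_add_card_filter_not (s := S)
        (fun v => r * (s' + ε * n) ≤ (deg R v : ℝ))]
      gcongr
      intro v
      simp
    have h2 : (S.card : ℝ) ≤ S'.card +
        (Finset.univ.filter fun v => (deg R v : ℝ) < r * (s' + ε * n)).card := by
      exact_mod_cast h1
    have := min_le_left (S.card : ℝ) (n / 2)
    linarith
  set Z' : Fin n → Finset (Option (Fin k × Bool × Bool)) := fun x => if x ∈ S' then Z x else ∅
    with hZ'
  have hlab := h.labels ℓ Z'
  have hSS : ∀ x ∈ S', x ∈ S := fun x hx => (Finset.mem_filter.1 hx).1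
  have hlow : (S'.card : ℝ) * (r * (s' + ε * n)) ≤ adjPairs R (fun x y => ℓ y ∈ Z' x) := by
    have h2 : ∑ x ∈ S', deg R x ≤ adjPairs R (fun x y => ℓ y ∈ Z' x) := by
      rw [adjPairs_eq_sum]
      refine le_trans (Finset.sum_le_sum fun x hx => ?_) (Finset.sum_le_univ_sum_of_nonneg
        (s := S') fun x => Nat.zero_le _)
      rw [deg_eq_card]
      refine Finset.card_le_card fun y hy => ?_
      simp only [Finset.mem_filter, Finset.mem_univ, true_and] at hy ⊢
      refine ⟨hy, ?_⟩
      simp only [hZ', if_pos hx]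
      exact hcov x (hSS x hx) y hy
    have h3 : (∑ x ∈ S', (deg R x : ℝ)) ≤ adjPairs R (fun x y => ℓ y ∈ Z' x) := by
      exact_mod_cast h2
    refine le_trans ?_ h3
    rw [← nsmul_eq_mul]
    exact Finset.card_nsmul_le_sum _ _ _ fun x hx => (Finset.mem_filter.1 hx).2
  have hup : (allPairs (fun x y => ℓ y ∈ Z' x) : ℝ) ≤ S'.card * B := by
    rw [allPairs_eq_sum]
    push_cast
    rw [← Finset.sum_subset (Finset.subset_univ S')]
    · rw [← nsmul_eq_mul]
      refine Finset.sum_le_card_nsmul _ _ _ fun x hx => ?_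
      simp only [hZ', if_pos hx]
      exact hB x (hSS x hx)
    · intro x _ hx
      simp [hZ', if_neg hx]
  have hSpos : (0:ℝ) < S'.card := lt_of_lt_of_le (by positivity) hcard
  -- the error term `γ n² r` is at most `|S'| · r · (ε / 8) n`, since `|S'| ≥ β n / 2`
  have herr : γ * n ^ 2 * r ≤ S'.card * r * (ε / 8 * n) := by
    have e1 : γ * n ^ 2 * r ≤ β * ε / 16 * n ^ 2 * r := by gcongr
    have hε : 0 < ε := by linarith
    have e2 : β / 2 * n * r * (ε / 8 * n) ≤ S'.card * r * (ε / 8 * n) := by gcongr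
    nlinarith
  have hfin : (S'.card * r) * (s' + ε * n) ≤ (S'.card * r) * (B + ε / 8 * n) := by
    have : r * (allPairs (fun x y => ℓ y ∈ Z' x) : ℝ) ≤ r * (S'.card * B) := by gcongr
    nlinarith
  have := le_of_mul_le_mul_left hfin (by positivity)
  have : β / 2 * n ≤ ε / 8 * n :=
    mul_le_mul_of_nonneg_right (by linarith) hn'.le
  linarith

/-- Every component has more than `n/2` vertices: small components contradict the expansion, larger
ones contradict `Good.le_of_cover` applied to the indicator labelling of the component. -/
theorem Good.connected (h : Good n r ε β γ k R) (hn : 0 < n) (hr : 0 < r) (hβ : 0 < β)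
    (hβε : β ≤ ε / 4) (hβ1 : β ≤ 1) (hγ : γ ≤ β * ε / 16) (hk : 0 < k) :
    R.Connected := by
  classical
  have hn' : (0:ℝ) < n := by exact_mod_cast hn
  have : Nonempty (Fin n) := ⟨⟨0, hn⟩⟩
  have key : ∀ u, ((n:ℝ) / 2) < (Finset.univ.filter fun w => R.Reachable u w).card := by
    intro u
    set A := Finset.univ.filter fun w => R.Reachable u w with hA
    have hAm : ∀ w, w ∈ A ↔ R.Reachable u w := by simp [hA]
    have hcl : ∀ x ∈ A, ∀ y, R.Adj x y → y ∈ A := fun x hx y hxy =>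
      (hAm y).2 (((hAm x).1 hx).trans hxy.reachable)
    by_contra hle
    push Not at hle
    rcases le_total (A.card : ℝ) (β * n) with hs | hs
    · have h1 := h.card_nbr (X := A) ⟨u, (hAm u).2 (SimpleGraph.Reachable.refl u)⟩ hs
      have h2 : nbr R A ⊆ A := by
        intro y hy
        simp only [nbr, Finset.mem_filter, Finset.mem_univ, true_and] at hy
        obtain ⟨x, hx, hxy⟩ := hy
        exact hcl x hx y hxy
      have := Finset.card_le_card h2
      omega
    · have h1 := h.le_of_cover hn hr hβ hβε hβ1 hγ hs
        (fun y => if y ∈ A then some (⟨0, hk⟩, true, true) else none)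
        (fun _ => {some (⟨0, hk⟩, true, true)}) (B := A.card)
        (by intro x hx y hxy; simp [hcl x hx y hxy])
        (by
          intro x hx
          refine Nat.cast_le.2 (Finset.card_le_card fun y hy => ?_)
          by_contra hyA
          simp [hyA] at hy)
      rw [min_eq_left hle] at h1
      have : 0 < ε := by linarith
      have : 0 < 3 / 4 * ε * n := by positivity
      linarith
  refine ⟨fun u v => ?_⟩
  by_contra huv
  have hdisj : Disjoint (Finset.univ.filter fun w => R.Reachable u w)
      (Finset.univ.filter fun w => R.Reachable v w) := by
    rw [Finset.disjoint_left]
    intro w hw hw'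
    simp only [Finset.mem_filter, Finset.mem_univ, true_and] at hw hw'
    exact huv (hw.trans hw'.symm)
  have h1 := Finset.card_union_of_disjoint hdisj
  have h2 := Finset.card_le_univ ((Finset.univ.filter fun w => R.Reachable u w) ∪
      (Finset.univ.filter fun w => R.Reachable v w))
  rw [h1, Fintype.card_fin] at h2
  have h3 : ((Finset.univ.filter fun w => R.Reachable u w).card : ℝ) +
      (Finset.univ.filter fun w => R.Reachable v w).card ≤ n := by exact_mod_cast h2
  have := key u
  have := key v
  linarith

/-- Heads double until they form a linear set, and then gain `ε n / 2` per rotation. -/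
theorem Good.card_heads (h : Good n r ε β γ k R) (hn : 0 < n) (hr : 0 < r) (hβ : 0 < β)
    (hβε : β ≤ ε / 4) (hβ1 : β ≤ 1) (hγ : γ ≤ β * ε / 16) (hε1 : ε ≤ 1)
    {t₁ t₂ L : ℕ} (hL : 0 < L) (hkL : n ≤ k * L) (ht₁ : n < 2 ^ t₁) (ht₂ : 2 ≤ t₂ * ε)
    (hτ : (2 * k + 1 + (t₁ + t₂) * L : ℝ) ≤ ε / 4 * n)
    {P : List (Fin n)} (hP : P.Nodup) (hP0 : P ≠ [])
    (hmax : ∀ Q, IsPathOn (R ⊔ listGraph P) Q → Q.length ≤ P.length) :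
    (1 / 2 + ε / 4) * n ≤ ((heads R P (t₁ + t₂)).card : ℝ) := by
  classical
  have hn' : (0:ℝ) < n := by exact_mod_cast hn
  have hε : 0 < ε := by linarith
  have hPlen : P.length ≤ k * L := by
    have := hP.length_le_card
    simp at this
    omega
  have phase1 : ∀ t, β * n < (heads R P t).card ∨ 2 ^ t ≤ (heads R P t).card := by
    intro t
    induction t with
    | zero =>
      right
      refine Finset.card_pos.2 ⟨P.head hP0, mem_heads.2 ⟨P, [], Rot.base, le_rfl, ?_⟩⟩
      exact List.head?_eq_some_head hP0
    | succ t ih =>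
      by_cases hb : β * n < (heads R P t).card
      · left
        refine lt_of_lt_of_le hb ?_
        exact_mod_cast Finset.card_le_card (heads_mono (Nat.le_succ t))
      · right
        have h1 := ih.resolve_left hb
        have h2 := h.card_nbr (X := heads R P t)
          (Finset.card_pos.1 (lt_of_lt_of_le (by positivity) h1)) (not_lt.1 hb)
        have h3 := card_nbr_heads_le hP hP0 hmax t
        rw [pow_succ]
        omega
  have hlin : ∀ t, t₁ ≤ t → β * n ≤ (heads R P t).card := by
    intro t ht
    refine le_trans ?_ (Nat.cast_le.2 (Finset.card_le_card (heads_mono ht)))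
    rcases phase1 t₁ with h1 | h1
    · exact h1.le
    · have h2 := Finset.card_le_univ (heads R P t₁)
      simp at h2
      omega
  -- the losses `2k + 1 + (t₁ + t₂)L` in `exists_labelling` reduce the gain `3εn/4` to `εn/2`
  have phase2 : ∀ j, j ≤ t₂ →
      min ((n:ℝ) / 2 + ε / 2 * n) (j * (ε / 2 * n)) ≤ (heads R P (t₁ + j)).card := by
    intro j
    induction j with
    | zero => intro _; exact (min_le_right _ _).trans (by simp)
    | succ j ih =>
      intro hj
      have ih' := ih (by omega)
      obtain ⟨ℓ, Z, hc, hB⟩ := exists_labelling hP hP0 hmax (t₁ + j) L k hL hPlen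
      have h1 := h.le_of_cover hn hr hβ hβε hβ1 hγ (hlin (t₁ + j) (by omega)) ℓ Z
        (B := (heads R P (t₁ + j + 1)).card + 2 * k + 1 + (t₁ + t₂) * L) hc
        (by
          intro x hx
          have := hB x hx
          have h2 : (t₁ + j) * L ≤ (t₁ + t₂) * L := Nat.mul_le_mul_right _ (by omega)
          have h3 : (Finset.univ.filter fun y => ℓ y ∈ Z x).card ≤
            (heads R P (t₁ + j + 1)).card + 2 * k + 1 + (t₁ + t₂) * L := by
              refine le_trans ?_ (this.trans (by omega))
              exact le_of_eq (by congr)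
          exact_mod_cast h3)
      have h4 : min ((heads R P (t₁ + j)).card : ℝ) (n / 2) + ε / 2 * n ≤
          (heads R P (t₁ + (j + 1))).card := by
        rw [← add_assoc]; linarith
      refine le_trans ?_ h4
      push_cast
      have e0 : 0 < ε / 2 * n := by positivity
      rcases le_total ((heads R P (t₁ + j)).card : ℝ) (n / 2) with h5 | h5
      · rw [min_eq_left h5]
        rcases min_le_iff.1 ih' with h6 | h6
        · linarith
        · exact (min_le_right _ _).trans (by linarith)
      · rw [min_eq_right h5]
        exact min_le_left _ _
  refine le_trans ?_ (phase2 t₂ le_rfl)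
  apply le_min
  · nlinarith
  · nlinarith

/-- Rotating one end of `P` gives the set `S`; rotating the other end of each resulting path gives
the sets `T v`. -/
theorem Good.re (h : Good n r ε β γ k R) (hn : 0 < n) (hr : 0 < r) (hβ : 0 < β)
    (hβε : β ≤ ε / 4) (hβ1 : β ≤ 1) (hγ : γ ≤ β * ε / 16) (hε1 : ε ≤ 1)
    {t₁ t₂ L : ℕ} (hL : 0 < L) (hkL : n ≤ k * L) (ht₁ : n < 2 ^ t₁) (ht₂ : 2 ≤ t₂ * ε)
    (hτ : (2 * k + 1 + (t₁ + t₂) * L : ℝ) ≤ ε / 4 * n) :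
    RE n (1 / 2 + ε / 4) R := by
  have hk : 0 < k := by
    rcases Nat.eq_zero_or_pos k with rfl | hk
    · omega
    · exact hk
  refine ⟨h.connected hn hr hβ hβε hβ1 hγ hk, fun P hP0 hP => ?_⟩
  by_cases hlong : ∃ Q : List (Fin n), IsPathOn (R ⊔ listGraph P) Q ∧ P.length < Q.length
  · exact Or.inl hlong
  right
  push Not at hlong
  have main : ∀ P' : List (Fin n), P'.Nodup → P'.Perm P →
      P'.IsChain (R ⊔ listGraph P).Adj →
      (1 / 2 + ε / 4) * n ≤ ((heads R P' (t₁ + t₂)).card : ℝ) ∧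
      ∀ w ∈ heads R P' (t₁ + t₂), ∃ Q : List (Fin n), Q.Nodup ∧ Q.Perm P ∧
        Q.IsChain (R ⊔ listGraph P).Adj ∧ Q.head? = some w ∧ Q.getLast? = P'.getLast? := by
    intro P' hP' hperm hch
    have hle : R ⊔ listGraph P' ≤ R ⊔ listGraph P := sup_le le_sup_left (listGraph_le hch)
    have hP0' : P' ≠ [] := by
      rintro rfl
      exact hP0 (List.nil_perm.1 hperm)
    constructor
    · refine h.card_heads hn hr hβ hβε hβ1 hγ hε1 hL hkL ht₁ ht₂ hτ hP' hP0' ?_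
      intro Q hQ
      rw [hperm.length_eq]
      exact hlong Q ⟨hQ.1, hQ.2.1, List.IsChain.imp (fun _ _ h => hle h) hQ.2.2⟩
    · intro w hw
      obtain ⟨Q, D, hr, -, hQ⟩ := mem_heads.1 hw
      exact ⟨Q, hr.perm.nodup_iff.2 hP', hr.perm.trans hperm,
        (hr.isChain hP').imp (fun _ _ h => hle h), hQ, hr.getLast?⟩
  obtain ⟨hc, hQ⟩ := main P hP (List.Perm.refl _)
    ((isChain_listGraph hP).imp (fun _ _ h => Or.inr h))
  refine ⟨heads R P (t₁ + t₂), by rw [Set.ncard_coe_finset]; exact hc, ?_⟩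
  have hv : ∀ v : Fin n, ∃ T : Set (Fin n), v ∈ heads R P (t₁ + t₂) →
      ((1 / 2 + ε / 4) * n ≤ (T.ncard : ℝ) ∧ ∀ w ∈ T, ∃ Q : List (Fin n),
          IsPathOn (R ⊔ listGraph P) Q ∧ Q.head? = some v ∧ Q.getLast? = some w ∧
          Q.toFinset = P.toFinset) := by
    intro v
    by_cases hv : v ∈ heads R P (t₁ + t₂)
    · obtain ⟨Q, q1, q2, q3, q4, -⟩ := hQ v hv
      -- rotate the reversed path: now `v` is the fixed end
      obtain ⟨hc', hQ'⟩ := main Q.reverse (List.nodup_reverse.2 q1)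
        ((List.reverse_perm Q).trans q2)
        (List.isChain_reverse.2 (q3.imp fun _ _ h => h.symm))
      refine ⟨heads R Q.reverse (t₁ + t₂), fun _ => ⟨by rw [Set.ncard_coe_finset]; exact hc', ?_⟩⟩
      intro w hw
      obtain ⟨Q', p1, p2, p3, p4, p5⟩ := hQ' w hw
      refine ⟨Q'.reverse, ⟨?_, List.nodup_reverse.2 p1,
        List.isChain_reverse.2 (p3.imp fun _ _ h => h.symm)⟩, ?_, ?_, ?_⟩
      · rw [Ne, List.reverse_eq_nil_iff]
        rintro rfl
        simp at p4
      · rw [List.head?_reverse, p5, List.getLast?_reverse, q4]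
      · rw [List.getLast?_reverse, p4]
      · rw [List.toFinset_reverse]
        exact List.toFinset_eq_of_perm _ _ p2
    · exact ⟨∅, fun h => absurd h hv⟩
  choose T hT using hv
  exact ⟨T, fun v hv => (hT v hv).1, fun v hv w hw => (hT v hv).2 w hw⟩

end

/-! ### Exponential moments in the binomial random graph -/

open Classical in
/-- The expectation of `f` over the binomial random graph `G_{n,p}`. -/
noncomputable def Ex (n : ℕ) (p : ℝ) (f : SimpleGraph (Fin n) → ℝ) : ℝ :=
  ∑ G : SimpleGraph (Fin n), weight n p G * f G

open Classical in
/-- The number of edges of `G` in the set `E` of potential edges. -/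
noncomputable def cnt {n : ℕ} (G : SimpleGraph (Fin n)) (E : Finset (Sym2 (Fin n))) : ℕ :=
  (E.filter fun e => e ∈ G.edgeSet).card

/-- The probability generating function of a binomial number of edges. -/
theorem Ex_pow_cnt (n : ℕ) (p z : ℝ) (E : Finset (Sym2 (Fin n))) (hE : ∀ e ∈ E, ¬ e.IsDiag) :
    Ex n p (fun G => z ^ cnt G E) = (1 + p * (z - 1)) ^ E.card := by
  classical
  set U : Finset (Sym2 (Fin n)) := Finset.univ.filter fun e => ¬ e.IsDiag with hU
  have hUc : U.card = n.choose 2 := by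
    have := Sym2.card_subtype_not_diag (α := Fin n)
    rw [Fintype.card_fin, Fintype.card_subtype] at this
    rw [hU, ← this]
  have hEU : E ⊆ U := fun e he => by simp [hU, hE e he]
  have key := Finset.prod_add (fun e => p * (if e ∈ E then z else 1)) (fun _ => 1 - p) U
  have hl : ∏ e ∈ U, (p * (if e ∈ E then z else 1) + (1 - p)) = (1 + p * (z - 1)) ^ E.card := by
    rw [← Finset.prod_subset hEU]
    · rw [Finset.prod_congr rfl (g := fun _ => 1 + p * (z - 1)), Finset.prod_const]
      intro e he
      rw [if_pos he]; ring
    · intro e _ he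
      rw [if_neg he]; ring
  rw [← hl, key, Ex]
  refine Finset.sum_bij' (i := fun G _ => G.edgeFinset)
    (j := fun F _ => SimpleGraph.fromEdgeSet (F : Set (Sym2 (Fin n)))) ?_ ?_ ?_ ?_ ?_
  · intro G _
    rw [Finset.mem_powerset]
    intro e he
    simp only [hU, Finset.mem_filter, Finset.mem_univ, true_and]
    exact G.not_isDiag_of_mem_edgeSet (SimpleGraph.mem_edgeFinset.1 he)
  · intro F _; exact Finset.mem_univ _
  · intro G _
    simp
  · intro F hF
    ext e
    refine (@SimpleGraph.mem_edgeFinset _ (SimpleGraph.fromEdgeSet _) e (_)).trans ?_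
    rw [SimpleGraph.edgeSet_fromEdgeSet]
    rw [Finset.mem_powerset] at hF
    constructor
    · exact fun h => h.1
    · intro h
      have := hF h
      simp only [hU, Finset.mem_filter, Finset.mem_univ, true_and] at this
      exact ⟨h, this⟩
  · intro G _
    have hsub : G.edgeFinset ⊆ U := by
      intro e he
      simp only [hU, Finset.mem_filter, Finset.mem_univ, true_and]
      exact G.not_isDiag_of_mem_edgeSet (SimpleGraph.mem_edgeFinset.1 he)
    have hnc : G.edgeSet.ncard = G.edgeFinset.card := by
      rw [← SimpleGraph.coe_edgeFinset, Set.ncard_coe_finset]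
    rw [Finset.prod_mul_distrib, Finset.prod_const, Finset.prod_const,
      Finset.card_sdiff_of_subset hsub, hUc, weight, hnc]
    have : ∏ e ∈ G.edgeFinset, (if e ∈ E then z else 1) = z ^ cnt G E := by
      rw [Finset.prod_ite, Finset.prod_const, Finset.prod_const_one, mul_one, cnt]
      congr 2
      ext e
      simp [and_comm]
    rw [this]
    ring

section
variable {n : ℕ} {p : ℝ}

theorem weight_nonneg (hp0 : 0 ≤ p) (hp1 : p ≤ 1) (G : SimpleGraph (Fin n)) :
    0 ≤ weight n p G :=
  mul_nonneg (pow_nonneg hp0 _) (pow_nonneg (by linarith) _)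

theorem Ex_one (n : ℕ) (p : ℝ) : Ex n p (fun _ => 1) = 1 := by
  simpa using Ex_pow_cnt n p 1 ∅ (by simp)

theorem Ex_mono (hp0 : 0 ≤ p) (hp1 : p ≤ 1) {f g : SimpleGraph (Fin n) → ℝ}
    (h : ∀ G, f G ≤ g G) : Ex n p f ≤ Ex n p g :=
  Finset.sum_le_sum fun G _ => mul_le_mul_of_nonneg_left (h G) (weight_nonneg hp0 hp1 G)

theorem Ex_const_mul (c : ℝ) (f : SimpleGraph (Fin n) → ℝ) :
    Ex n p (fun G => c * f G) = c * Ex n p f := by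
  rw [Ex, Ex, Finset.mul_sum]
  exact Finset.sum_congr rfl fun G _ => by ring

theorem Ex_add (f g : SimpleGraph (Fin n) → ℝ) :
    Ex n p (fun G => f G + g G) = Ex n p f + Ex n p g := by
  rw [Ex, Ex, Ex, ← Finset.sum_add_distrib]
  exact Finset.sum_congr rfl fun G _ => by ring

theorem Ex_sum {ι : Type*} (s : Finset ι) (f : ι → SimpleGraph (Fin n) → ℝ) :
    Ex n p (fun G => ∑ i ∈ s, f i G) = ∑ i ∈ s, Ex n p (f i) := by
  simp only [Ex, Finset.mul_sum]
  rw [Finset.sum_comm]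

open Classical in
theorem Pr_eq_Ex (Q : SimpleGraph (Fin n) → Prop) :
    Pr n p Q = Ex n p (fun G => if Q G then 1 else 0) := by
  rw [Pr, Ex]
  refine Finset.sum_congr rfl fun G _ => ?_
  split_ifs <;> simp

theorem Pr_nonneg (hp0 : 0 ≤ p) (hp1 : p ≤ 1) (Q : SimpleGraph (Fin n) → Prop) :
    0 ≤ Pr n p Q := by
  classical
  refine Finset.sum_nonneg fun G _ => ?_
  split_ifs
  · exact weight_nonneg hp0 hp1 G
  · exact le_rfl

/-- Exponential moment bound for the number of edges in `E` after thinning. -/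
theorem Ex_Ex_exp_le {q : ℝ} (hp0 : 0 ≤ p) (hq0 : 0 ≤ q) (hpq : p * q ≤ 1) (lam a : ℝ)
    (E : Finset (Sym2 (Fin n))) (hE : ∀ e ∈ E, ¬ e.IsDiag) :
    Ex n p (fun G => Ex n q (fun Q => exp (lam * (cnt (G ⊓ Q) E - a)))) ≤
      exp (p * q * E.card * (exp lam - 1) - lam * a) := by
  classical
  have h1 : ∀ G : SimpleGraph (Fin n), Ex n q (fun Q => exp (lam * (cnt (G ⊓ Q) E - a))) =
      exp (-(lam * a)) * (1 + q * (exp lam - 1)) ^ cnt G E := by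
    intro G
    have h2 : ∀ Q : SimpleGraph (Fin n), exp (lam * (cnt (G ⊓ Q) E - a)) =
        exp (-(lam * a)) * exp lam ^ cnt Q (E.filter fun e => e ∈ G.edgeSet) := by
      intro Q
      have h3 : cnt (G ⊓ Q) E = cnt Q (E.filter fun e => e ∈ G.edgeSet) := by
        rw [cnt, cnt, Finset.filter_filter]
        simp
      rw [h3, ← exp_nat_mul, ← exp_add]
      congr 1
      ring
    simp only [h2]
    rw [Ex_const_mul, Ex_pow_cnt]
    · rfl
    · intro e he
      exact hE e (Finset.mem_filter.1 he).1
  simp only [h1]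
  have h0 : exp (p * q * E.card * (exp lam - 1) - lam * a) =
      exp (-(lam * a)) * exp (p * q * E.card * (exp lam - 1)) := by
    rw [← exp_add]
    congr 1
    ring
  rw [Ex_const_mul, Ex_pow_cnt _ _ _ _ hE, h0]
  gcongr
  have h4 : p * q * E.card * (exp lam - 1) = E.card * (p * q * (exp lam - 1)) := by ring
  rw [h4, exp_nat_mul]
  have h5 : 0 ≤ p * q := mul_nonneg hp0 hq0
  have h6 : 0 < exp lam := exp_pos _
  apply pow_le_pow_left₀
  · nlinarith
  · have := add_one_le_exp (p * q * (exp lam - 1))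
    linarith

theorem Ex_exp_le {q : ℝ} (hq0 : 0 ≤ q) (hq1 : q ≤ 1) (lam a : ℝ)
    (E : Finset (Sym2 (Fin n))) (hE : ∀ e ∈ E, ¬ e.IsDiag) :
    Ex n q (fun Q => exp (lam * (cnt Q E - a))) ≤
      exp (q * E.card * (exp lam - 1) - lam * a) := by
  have h2 : ∀ Q : SimpleGraph (Fin n), exp (lam * (cnt Q E - a)) =
      exp (-(lam * a)) * exp lam ^ cnt Q E := by
    intro Q
    rw [← exp_nat_mul, ← exp_add]
    congr 1
    ring
  simp only [h2]
  have h0 : exp (q * E.card * (exp lam - 1) - lam * a) =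
      exp (-(lam * a)) * exp (q * E.card * (exp lam - 1)) := by
    rw [← exp_add]
    congr 1
    ring
  rw [Ex_const_mul, Ex_pow_cnt _ _ _ _ hE, h0]
  gcongr
  have h4 : q * E.card * (exp lam - 1) = E.card * (q * (exp lam - 1)) := by ring
  rw [h4, exp_nat_mul]
  have h6 : 0 < exp lam := exp_pos _
  apply pow_le_pow_left₀
  · nlinarith
  · have := add_one_le_exp (q * (exp lam - 1))
    linarith

/-- Upper tails in the thinned graph, with a union bound over a finite family of edge sets. -/
theorem Ex_Pr_exists_le {q : ℝ} (hp0 : 0 ≤ p) (hp1 : p ≤ 1) (hq0 : 0 ≤ q) (hq1 : q ≤ 1)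
    {ι : Type*} [Fintype ι] (lam : ℝ) (hlam : 0 ≤ lam) (a : ι → ℝ)
    (E : ι → Finset (Sym2 (Fin n))) (hE : ∀ i, ∀ e ∈ E i, ¬ e.IsDiag) :
    Ex n p (fun G => Pr n q (fun Q => ∃ i, a i ≤ cnt (G ⊓ Q) (E i))) ≤
      ∑ i, exp (p * q * (E i).card * (exp lam - 1) - lam * a i) := by
  classical
  have hpq : p * q ≤ 1 := mul_le_one₀ hp1 hq0 hq1
  calc Ex n p (fun G => Pr n q (fun Q => ∃ i, a i ≤ cnt (G ⊓ Q) (E i)))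
      ≤ Ex n p (fun G => ∑ i, Ex n q (fun Q => exp (lam * (cnt (G ⊓ Q) (E i) - a i)))) := by
        refine Ex_mono hp0 hp1 fun G => ?_
        rw [Pr_eq_Ex, ← Ex_sum]
        refine Ex_mono hq0 hq1 fun Q => ?_
        split_ifs with h
        · obtain ⟨i, hi⟩ := h
          refine le_trans ?_ (Finset.single_le_sum (fun j _ => (exp_pos _).le)
            (Finset.mem_univ i))
          rw [one_le_exp_iff]
          exact mul_nonneg hlam (by linarith)
        · exact Finset.sum_nonneg fun j _ => (exp_pos _).le
    _ = ∑ i, Ex n p (fun G => Ex n q (fun Q => exp (lam * (cnt (G ⊓ Q) (E i) - a i)))) :=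
        Ex_sum _ _
    _ ≤ _ := Finset.sum_le_sum fun i _ => Ex_Ex_exp_le hp0 hq0 hpq lam (a i) (E i) (hE i)

/-- Lower tails with a union bound. -/
theorem Pr_exists_lt_le {q : ℝ} (hq0 : 0 ≤ q) (hq1 : q ≤ 1)
    {ι : Type*} [Fintype ι] (lam : ℝ) (hlam : 0 ≤ lam) (a : ι → ℝ)
    (E : ι → Finset (Sym2 (Fin n))) (hE : ∀ i, ∀ e ∈ E i, ¬ e.IsDiag) :
    Pr n q (fun Q => ∃ i, (cnt Q (E i) : ℝ) < a i) ≤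
      ∑ i, exp (q * (E i).card * (exp (-lam) - 1) + lam * a i) := by
  classical
  calc Pr n q (fun Q => ∃ i, (cnt Q (E i) : ℝ) < a i)
      ≤ ∑ i, Ex n q (fun Q => exp (-lam * (cnt Q (E i) - a i))) := by
        rw [Pr_eq_Ex, ← Ex_sum]
        refine Ex_mono hq0 hq1 fun Q => ?_
        split_ifs with h
        · obtain ⟨i, hi⟩ := h
          refine le_trans ?_ (Finset.single_le_sum (fun j _ => (exp_pos _).le)
            (Finset.mem_univ i))
          rw [one_le_exp_iff]
          nlinarith
        · exact Finset.sum_nonneg fun j _ => (exp_pos _).le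
    _ ≤ _ := by
        refine Finset.sum_le_sum fun i _ => (Ex_exp_le hq0 hq1 (-lam) (a i) (E i) (hE i)).trans ?_
        apply le_of_eq
        congr 1
        ring

theorem Pr_mono (hp0 : 0 ≤ p) (hp1 : p ≤ 1) {A B : SimpleGraph (Fin n) → Prop}
    (h : ∀ G, A G → B G) : Pr n p A ≤ Pr n p B := by
  classical
  rw [Pr_eq_Ex, Pr_eq_Ex]
  refine Ex_mono hp0 hp1 fun G => ?_
  by_cases hA : A G
  · simp [hA, h G hA]
  · rw [if_neg hA]; split_ifs <;> norm_num

/-- If the complement of `A` is covered by `B` and the event `1/2 ≤ f`, then union bound and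
Markov's inequality give a lower bound on the probability of `A`. -/
theorem one_sub_le_Pr (hp0 : 0 ≤ p) (hp1 : p ≤ 1) {A B : SimpleGraph (Fin n) → Prop}
    {f : SimpleGraph (Fin n) → ℝ} (hf : ∀ G, 0 ≤ f G)
    (h : ∀ G, ¬ B G → f G < 1 / 2 → A G) : 1 - (Pr n p B + 2 * Ex n p f) ≤ Pr n p A := by
  classical
  have : (1:ℝ) ≤ Pr n p A + (Pr n p B + 2 * Ex n p f) := by
    rw [Pr_eq_Ex, Pr_eq_Ex, ← Ex_const_mul, ← Ex_add, ← Ex_add]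
    refine (Ex_one n p).ge.trans ?_
    refine Ex_mono hp0 hp1 fun G => ?_
    have hfG := hf G
    by_cases hA : A G
    · rw [if_pos hA]
      split_ifs <;> linarith
    by_cases hB : B G
    · rw [if_pos hB, if_neg hA]; linarith
    · rw [if_neg hA, if_neg hB]
      have : ¬ f G < 1 / 2 := fun h' => hA (h G hB h')
      linarith
  linarith

theorem exists_of_Pr_add_lt (hp0 : 0 ≤ p) (hp1 : p ≤ 1) {A B D : SimpleGraph (Fin n) → Prop}
    (h : Pr n p A + Pr n p B + Pr n p D < 1) : ∃ G, ¬ A G ∧ ¬ B G ∧ ¬ D G := by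
  classical
  by_contra hc
  push Not at hc
  have : (1:ℝ) ≤ Pr n p A + Pr n p B + Pr n p D := by
    rw [Pr_eq_Ex, Pr_eq_Ex, Pr_eq_Ex, ← Ex_add, ← Ex_add]
    refine (Ex_one n p).ge.trans ?_
    refine Ex_mono hp0 hp1 fun G => ?_
    by_cases hA : A G
    · rw [if_pos hA]; split_ifs <;> norm_num
    by_cases hB : B G
    · rw [if_pos hB, if_neg hA]; split_ifs <;> norm_num
    · rw [if_pos (hc G hA hB), if_neg hA, if_neg hB]; norm_num
  linarith

end

/-! ### Tail bounds for the thinned random graph -/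

section
variable {n : ℕ}

open Classical in
/-- The unordered pairs coming from the pairs `(x, y)` with `A x y` and `x < y` (if `o` holds) or
`y < x` (otherwise). Fixing the orientation makes the passage to unordered pairs injective. -/
noncomputable def orientEdges (A : Fin n → Fin n → Prop) (o : Bool) : Finset (Sym2 (Fin n)) :=
  (Finset.univ.filter fun z : Fin n × Fin n =>
    A z.1 z.2 ∧ (if o then z.1 < z.2 else z.2 < z.1)).image fun z => s(z.1, z.2)

theorem orientEdges_not_isDiag (A : Fin n → Fin n → Prop) (o : Bool) :
    ∀ e ∈ orientEdges A o, ¬ e.IsDiag := by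
  classical
  intro e he
  obtain ⟨⟨x, y⟩, hz, rfl⟩ := Finset.mem_image.1 he
  simp only [Finset.mem_filter, Finset.mem_univ, true_and] at hz
  rw [Sym2.mk_isDiag_iff]
  intro hxy
  simp only at hxy
  subst hxy
  rcases o with _ | _ <;> simp at hz

theorem orient_injOn (A : Fin n → Fin n → Prop) (o : Bool) :
    Set.InjOn (fun z : Fin n × Fin n => s(z.1, z.2))
      {z | A z.1 z.2 ∧ (if o then z.1 < z.2 else z.2 < z.1)} := by
  rintro ⟨x, y⟩ h1 ⟨x', y'⟩ h2 h
  simp only [Set.mem_ofPred_eq] at h1 h2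
  rcases Sym2.eq_iff.1 h with ⟨h3, h4⟩ | ⟨h3, h4⟩
  · exact Prod.ext h3 h4
  · simp only at h3 h4
    subst h3 h4
    rcases o with _ | _
    · simp only [Bool.false_eq_true, if_false] at h1 h2
      exact absurd h1.2 (not_lt.2 h2.2.le)
    · simp only [if_true] at h1 h2
      exact absurd h1.2 (not_lt.2 h2.2.le)

open Classical in
theorem card_orientEdges (A : Fin n → Fin n → Prop) (o : Bool) :
    (orientEdges A o).card = (Finset.univ.filter fun z : Fin n × Fin n =>
      A z.1 z.2 ∧ (if o then z.1 < z.2 else z.2 < z.1)).card := by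
  rw [orientEdges, Finset.card_image_of_injOn]
  simpa using orient_injOn A o

theorem card_orientEdges_le (A : Fin n → Fin n → Prop) (o : Bool) :
    (orientEdges A o).card ≤ allPairs A := by
  classical
  rw [card_orientEdges, allPairs]
  exact Finset.card_le_card fun z hz => by
    simp only [Finset.mem_filter, Finset.mem_univ, true_and] at hz ⊢
    exact hz.1

theorem card_orientEdges_add_le (A : Fin n → Fin n → Prop) :
    (orientEdges A true).card + (orientEdges A false).card ≤ allPairs A := by
  classical
  rw [card_orientEdges, card_orientEdges, allPairs, ← Finset.card_union_of_disjoint]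
  · exact Finset.card_le_card fun z hz => by
      simp only [Finset.mem_union, Finset.mem_filter, Finset.mem_univ, true_and] at hz ⊢
      tauto
  · rw [Finset.disjoint_left]
    intro z hz hz'
    simp only [Finset.mem_filter, Finset.mem_univ, true_and, if_true, Bool.false_eq_true,
      if_false] at hz hz'
    exact absurd hz.2 (not_lt.2 hz'.2.le)

theorem adjPairs_le_cnt {R F : SimpleGraph (Fin n)} (hRF : R ≤ F) (A : Fin n → Fin n → Prop) :
    adjPairs R A ≤ cnt F (orientEdges A true) + cnt F (orientEdges A false) := by
  classical
  have key : ∀ o : Bool, cnt F (orientEdges A o) = (Finset.univ.filter fun z : Fin n × Fin n =>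
      (A z.1 z.2 ∧ (if o then z.1 < z.2 else z.2 < z.1)) ∧ F.Adj z.1 z.2).card := by
    intro o
    rw [cnt, orientEdges, Finset.filter_image, Finset.card_image_of_injOn, Finset.filter_filter]
    · simp only [SimpleGraph.mem_edgeSet]
    · refine (orient_injOn A o).mono fun z hz => ?_
      simp only [Finset.coe_filter, Finset.mem_filter, Set.mem_ofPred_eq] at hz
      exact hz.1.2
  rw [key, key]
  refine le_trans (Finset.card_le_card ?_) (Finset.card_union_le _ _)
  intro z hz
  simp only [Finset.mem_union, Finset.mem_filter, Finset.mem_univ, true_and, if_true,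
    Bool.false_eq_true, if_false] at hz ⊢
  have h1 := hRF hz.1
  rcases lt_trichotomy z.1 z.2 with h | h | h
  · exact Or.inl ⟨⟨hz.2, h⟩, h1⟩
  · exact absurd h h1.ne
  · exact Or.inr ⟨⟨hz.2, h⟩, h1⟩

theorem allPairs_le_sq (A : Fin n → Fin n → Prop) : allPairs A ≤ n ^ 2 := by
  classical
  refine (Finset.card_le_univ _).trans ?_
  simp [sq]

theorem exp_sub_one_le_add_sq {x : ℝ} (hx : |x| ≤ 1) : exp x - 1 ≤ x + x ^ 2 := by
  have := (abs_le.1 (Real.abs_exp_sub_one_sub_id_le hx)).2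
  linarith

/-- Too many edges in some family of pairs described by labels. -/
def LabelBad (n : ℕ) (r γ : ℝ) (k : ℕ) (F : SimpleGraph (Fin n)) : Prop :=
  ∃ i : (Fin n → Option (Fin k × Bool × Bool)) ×
      (Fin n → Finset (Option (Fin k × Bool × Bool))) × Bool,
    r * (orientEdges (fun x y => i.1 y ∈ i.2.1 x) i.2.2).card + γ / 2 * n ^ 2 * r ≤
      cnt F (orientEdges (fun x y => i.1 y ∈ i.2.1 x) i.2.2)

theorem labels_of_not_labelBad {r γ : ℝ} {k : ℕ} {F R : SimpleGraph (Fin n)} (hr : 0 ≤ r)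
    (hRF : R ≤ F) (h : ¬ LabelBad n r γ k F) (ℓ : Fin n → Option (Fin k × Bool × Bool))
    (Z : Fin n → Finset (Option (Fin k × Bool × Bool))) :
    (adjPairs R (fun x y => ℓ y ∈ Z x) : ℝ) ≤
      r * allPairs (fun x y => ℓ y ∈ Z x) + γ * n ^ 2 * r := by
  rw [LabelBad] at h
  push Not at h
  have h1 := h (ℓ, Z, true)
  have h2 := h (ℓ, Z, false)
  simp only at h1 h2
  have h3 : (adjPairs R (fun x y => ℓ y ∈ Z x) : ℝ) ≤
      cnt F (orientEdges (fun x y => ℓ y ∈ Z x) true) +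
      cnt F (orientEdges (fun x y => ℓ y ∈ Z x) false) := by
    exact_mod_cast adjPairs_le_cnt hRF _
  have h4 : ((orientEdges (fun x y => ℓ y ∈ Z x) true).card : ℝ) +
      (orientEdges (fun x y => ℓ y ∈ Z x) false).card ≤ allPairs (fun x y => ℓ y ∈ Z x) := by
    exact_mod_cast card_orientEdges_add_le _
  nlinarith [mul_le_mul_of_nonneg_left h4 hr]

theorem labelBad_tail {p q γ : ℝ} (k : ℕ) (hp0 : 0 ≤ p) (hp1 : p ≤ 1) (hq0 : 0 ≤ q) (hq1 : q ≤ 1)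
    (hγ0 : 0 ≤ γ) (hγ1 : γ ≤ 1) :
    Ex n p (fun G => Pr n q (fun Q => LabelBad n (p * q) γ k (G ⊓ Q))) ≤
      2 * exp (2 * (4 * k + 1) * n - n ^ 2 * (p * q) * (γ ^ 2 / 16)) := by
  classical
  have hr : 0 ≤ p * q := mul_nonneg hp0 hq0
  refine (Ex_Pr_exists_le hp0 hp1 hq0 hq1 (γ / 4) (by positivity) _ _
    (fun i => orientEdges_not_isDiag _ _)).trans ?_
  refine (Finset.sum_le_card_nsmul _ _ (exp (-(n ^ 2 * (p * q) * (γ ^ 2 / 16)))) ?_).trans ?_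
  · intro i _
    rw [exp_le_exp]
    set m : ℝ := ((orientEdges (fun x y => i.1 y ∈ i.2.1 x) i.2.2).card : ℝ) with hm
    have hm0 : 0 ≤ m := Nat.cast_nonneg _
    have hmn : m ≤ n ^ 2 := by
      rw [hm]
      exact_mod_cast (card_orientEdges_le _ _).trans (allPairs_le_sq _)
    have h1 : exp (γ / 4) - 1 ≤ γ / 4 + (γ / 4) ^ 2 :=
      exp_sub_one_le_add_sq (by rw [abs_of_nonneg] <;> linarith)
    have h2 := mul_le_mul_of_nonneg_left h1 (mul_nonneg hr hm0)
    have h3 : p * q * m * (γ / 4) ^ 2 ≤ p * q * n ^ 2 * (γ / 4) ^ 2 := by gcongr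
    nlinarith
  · have hK : Fintype.card (Option (Fin k × Bool × Bool)) = 4 * k + 1 := by
      simp; ring
    rw [Finset.card_univ, Fintype.card_prod, Fintype.card_prod, Fintype.card_fun, Fintype.card_fun,
      Fintype.card_finset, hK, Fintype.card_fin, Fintype.card_bool, nsmul_eq_mul]
    push_cast
    have h1 : ((4 * k + 1 : ℝ)) ^ n ≤ exp ((4 * k + 1) * n) := by
      rw [mul_comm _ (n : ℝ), exp_nat_mul]
      gcongr
      have := add_one_le_exp (4 * k + 1 : ℝ)
      linarith
    have h2 : ((2 : ℝ) ^ (4 * k + 1)) ^ n ≤ exp ((4 * k + 1) * n) := by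
      rw [mul_comm _ (n : ℝ), exp_nat_mul]
      gcongr
      have h4 := exp_nat_mul (1 : ℝ) (4 * k + 1)
      push_cast at h4
      rw [mul_one] at h4
      rw [h4]
      gcongr
      have := add_one_le_exp (1 : ℝ)
      linarith
    have h3 : exp (2 * (4 * k + 1) * n - n ^ 2 * (p * q) * (γ ^ 2 / 16)) =
        exp ((4 * k + 1) * n) * exp ((4 * k + 1) * n) *
          exp (-(n ^ 2 * (p * q) * (γ ^ 2 / 16))) := by
      rw [← exp_add, ← exp_add]
      congr 1
      ring
    rw [h3]
    calc _ ≤ exp ((4 * k + 1) * n) * (exp ((4 * k + 1) * n) * 2) *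
          exp (-(n ^ 2 * (p * q) * (γ ^ 2 / 16))) := by gcongr
      _ = _ := by ring

/-- Some pair of sets `X = range f`, `Y = range g` with `|X| ≤ x + 1` and `|Y| ≤ 7(x+1)`, where
`x + 1 ≤ βn`, spans too many edges. -/
def SmallBad (n : ℕ) (r ε β : ℝ) (F : SimpleGraph (Fin n)) : Prop :=
  ∃ i : (x : Fin n) × (Fin (x + 1) → Fin n) × (Fin (7 * (x + 1)) → Fin n) × Bool,
    1 / 2 * (r * (ε * n) * (i.1 + 1)) ≤
      cnt F (orientEdges (fun u w => ((i.1 : ℝ) + 1 ≤ β * n) ∧ u ∈ Set.range i.2.1 ∧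
        w ∈ Set.range i.2.2.1) i.2.2.2)

theorem exists_range_eq {m : ℕ} {X : Finset (Fin n)} (hX : X.Nonempty) (h : X.card ≤ m) :
    ∃ f : Fin m → Fin n, Set.range f = X := by
  obtain ⟨x, hx⟩ := hX
  let e := X.equivFin
  refine ⟨fun j => if hj : (j : ℕ) < X.card then (e.symm ⟨j, hj⟩ : Fin n) else x, ?_⟩
  ext y
  simp only [Set.mem_range, Finset.mem_coe]
  constructor
  · rintro ⟨j, rfl⟩
    split_ifs
    · exact Finset.coe_mem _
    · exact hx
  · intro hy
    refine ⟨⟨e ⟨y, hy⟩, (e ⟨y, hy⟩).2.trans_le h⟩, ?_⟩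
    simp

theorem small_of_not_smallBad {r ε β : ℝ} {F R : SimpleGraph (Fin n)} (hr : 0 < r) (hε : 0 < ε)
    (hRF : R ≤ F) (h : ¬ SmallBad n r ε β F) (X Y : Finset (Fin n)) (hX : X.Nonempty)
    (hXβ : (X.card : ℝ) ≤ β * n) (hY : Y.card ≤ 7 * X.card) :
    (adjPairs R (fun x y => x ∈ X ∧ y ∈ Y) : ℝ) < r * (ε * n) * X.card := by
  classical
  have hc : 0 < X.card := hX.card_pos
  have hn : X.card ≤ n := by simpa using X.card_le_univ
  rcases Y.eq_empty_or_nonempty with rfl | hYne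
  · have : adjPairs R (fun x y => x ∈ X ∧ y ∈ (∅ : Finset (Fin n))) = 0 := by
      simp [adjPairs]
    rw [this]
    have h1 : (0:ℝ) < X.card := by exact_mod_cast hc
    have h2 : (0:ℝ) < n := by exact_mod_cast hc.trans_le hn
    push_cast
    positivity
  · obtain ⟨x, hx⟩ : ∃ x, X.card = x + 1 := ⟨X.card - 1, by omega⟩
    rw [hx] at hXβ hY ⊢
    obtain ⟨f, hf⟩ := exists_range_eq hX hx.le
    obtain ⟨g, hg⟩ := exists_range_eq hYne hY
    rw [SmallBad] at h
    push Not at h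
    have hxn : x < n := by omega
    have key : ∀ o, (cnt F (orientEdges (fun u w => u ∈ X ∧ w ∈ Y) o) : ℝ) <
        1 / 2 * (r * (ε * n) * (x + 1)) := by
      intro o
      have h1 := h ⟨⟨x, hxn⟩, f, g, o⟩
      simp only [hf, hg] at h1
      push_cast at hXβ
      simpa [hXβ] using h1
    have h1 := key true
    have h2 := key false
    have h3 : (adjPairs R (fun u w => u ∈ X ∧ w ∈ Y) : ℝ) ≤
      cnt F (orientEdges (fun u w => u ∈ X ∧ w ∈ Y) true) +
      cnt F (orientEdges (fun u w => u ∈ X ∧ w ∈ Y) false) := by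
      exact_mod_cast adjPairs_le_cnt hRF _
    push_cast
    linarith

theorem smallBad_tail {p q ε β : ℝ} (hp0 : 0 ≤ p) (hp1 : p ≤ 1) (hq0 : 0 ≤ q) (hq1 : q ≤ 1)
    (hβ0 : 0 ≤ β) (hβ : 56 * β ≤ ε) :
    Ex n p (fun G => Pr n q (fun Q => SmallBad n (p * q) ε β (G ⊓ Q))) ≤
      ∑ x : Fin n, 2 * ((n : ℝ) ^ (8 * ((x : ℕ) + 1)) *
        exp (-(ε / 4 * (n * (p * q)) * ((x : ℕ) + 1)))) := by
  classical
  have hr : 0 ≤ p * q := mul_nonneg hp0 hq0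
  refine (Ex_Pr_exists_le hp0 hp1 hq0 hq1 1 zero_le_one _ _
    (fun i => orientEdges_not_isDiag _ _)).trans ?_
  rw [Fintype.sum_sigma]
  refine Finset.sum_le_sum fun x _ => ?_
  refine (Finset.sum_le_card_nsmul _ _ (exp (-(ε / 4 * (n * (p * q)) * ((x : ℕ) + 1)))) ?_).trans ?_
  · rintro ⟨f, g, o⟩ _
    rw [exp_le_exp]
    simp only
    set m : ℝ := ((orientEdges (fun u w => ((x : ℝ) + 1 ≤ β * n) ∧ u ∈ Set.range f ∧
        w ∈ Set.range g) o).card : ℝ) with hm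
    have hm0 : 0 ≤ m := Nat.cast_nonneg _
    have hmn : m ≤ 7 * ((x : ℕ) + 1) * (β * n) := by
      by_cases hx : (x : ℝ) + 1 ≤ β * n
      · have h1 : (orientEdges (fun u w => ((x : ℝ) + 1 ≤ β * n) ∧ u ∈ Set.range f ∧
            w ∈ Set.range g) o).card ≤ ((x : ℕ) + 1) * (7 * ((x : ℕ) + 1)) := by
          refine (card_orientEdges_le _ _).trans ?_
          have h2 : (Finset.univ.image f ×ˢ Finset.univ.image g).card ≤
              ((x : ℕ) + 1) * (7 * ((x : ℕ) + 1)) := by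
            rw [Finset.card_product]
            refine Nat.mul_le_mul (Finset.card_image_le.trans ?_) (Finset.card_image_le.trans ?_)
            all_goals simp
          refine (Finset.card_le_card fun z hz => ?_).trans h2
          simpa [hx] using hz
        have h2 : m ≤ ((x : ℕ) + 1) * (7 * ((x : ℕ) + 1)) := by
          rw [hm]; exact_mod_cast h1
        have h3 : (0:ℝ) ≤ (x : ℕ) + 1 := by positivity
        nlinarith
      · have : m = 0 := by
          rw [hm]
          simp [hx, orientEdges]
        rw [this]
        positivity
    have he : exp 1 - 1 ≤ 2 := by have := exp_one_lt_d9; linarith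
    have h0 : 0 ≤ exp 1 - 1 := by have := add_one_le_exp (1:ℝ); linarith
    have h4 : p * q * m * (exp 1 - 1) ≤ p * q * (7 * ((x : ℕ) + 1) * (β * n)) * 2 := by gcongr
    have h5 : p * q * (7 * ((x : ℕ) + 1) * (β * n)) * 2 ≤
        ε / 4 * (n * (p * q)) * ((x : ℕ) + 1) := by
      have : 0 ≤ (p * q) * n * ((x : ℕ) + 1) := by positivity
      nlinarith [mul_le_mul_of_nonneg_left hβ this]
    linarith
  · rw [Finset.card_univ, Fintype.card_prod, Fintype.card_prod, Fintype.card_fun, Fintype.card_fun,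
      Fintype.card_fin, Fintype.card_fin, Fintype.card_fin, Fintype.card_bool, nsmul_eq_mul]
    push_cast
    apply le_of_eq
    have : 8 * ((x : ℕ) + 1) = (x + 1) + 7 * (x + 1) := by ring
    rw [this, pow_add]
    ring

open Classical in
/-- Degrees in a random subgraph of `T`: the lower tail, with a union bound over the vertices. -/
theorem deg_tail {q g : ℝ} (hq0 : 0 ≤ q) (hq1 : q ≤ 1) (hg0 : 0 ≤ g) (hg1 : g ≤ 1)
    (T : SimpleGraph (Fin n)) :
    Pr n q (fun Q => ∃ v, (deg (T ⊓ Q) v : ℝ) < (1 - g) * q * deg T v) ≤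
      ∑ v, exp (-(q * deg T v * (g ^ 2 / 4))) := by
  set E : Fin n → Finset (Sym2 (Fin n)) := fun v =>
    (Finset.univ.filter fun w => T.Adj v w).image fun w => s(v, w) with hE
  have hinj : ∀ v : Fin n, Function.Injective fun w : Fin n => s(v, w) := fun v w w' h =>
    Sym2.congr_right.1 h
  have hcard : ∀ v, (E v).card = deg T v := by
    intro v
    rw [hE, deg_eq_card]
    exact Finset.card_image_of_injective _ (hinj v)
  have hcnt : ∀ Q v, cnt Q (E v) = deg (T ⊓ Q) v := by
    intro Q v
    rw [hE, cnt, deg_eq_card, Finset.filter_image, Finset.card_image_of_injective _ (hinj v),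
      Finset.filter_filter]
    simp
  have hdiag : ∀ v, ∀ e ∈ E v, ¬ e.IsDiag := by
    intro v e he
    obtain ⟨w, hw, rfl⟩ := Finset.mem_image.1 he
    rw [Sym2.mk_isDiag_iff]
    exact (Finset.mem_filter.1 hw).2.ne
  have h1 := Pr_exists_lt_le hq0 hq1 (g / 2) (by positivity) (fun v => (1 - g) * q * deg T v)
    E hdiag
  simp only [hcnt, hcard] at h1
  refine h1.trans (Finset.sum_le_sum fun v _ => ?_)
  rw [exp_le_exp]
  have h2 : exp (-(g / 2)) - 1 ≤ -(g / 2) + (-(g / 2)) ^ 2 :=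
    exp_sub_one_le_add_sq (by rw [abs_neg, abs_of_nonneg] <;> linarith)
  have h3 : 0 ≤ q * deg T v := by positivity
  nlinarith [mul_le_mul_of_nonneg_left h2 h3]

end

/-! ### Degrees after deleting a Pósa-type subgraph, and the proof of the theorem -/

section
variable {n : ℕ}

theorem deg_sdiff_add {G H : SimpleGraph (Fin n)} (hHG : H ≤ G) (v : Fin n) :
    deg (G \ H) v + deg H v = deg G v := by
  classical
  rw [deg_eq_card, deg_eq_card, deg_eq_card, ← Finset.card_union_of_disjoint]
  · congr 1
    ext w
    simp only [Finset.mem_union, Finset.mem_filter, Finset.mem_univ, true_and,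
      SimpleGraph.sdiff_adj]
    constructor
    · rintro (h | h)
      · exact h.1
      · exact hHG h
    · intro h
      by_cases h' : H.Adj v w
      · exact Or.inr h'
      · exact Or.inl ⟨h, h'⟩
  · rw [Finset.disjoint_left]
    intro w hw hw'
    simp only [Finset.mem_filter, Finset.mem_univ, true_and, SimpleGraph.sdiff_adj] at hw hw'
    exact hw.2 hw'

theorem deg_top (v : Fin n) : deg (⊤ : SimpleGraph (Fin n)) v = n - 1 := by
  classical
  rw [deg_eq_card]
  trans (Finset.univ.erase v).card
  · congr 1
    ext w
    simp [eq_comm]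
  rw [Finset.card_erase_of_mem (Finset.mem_univ _), Finset.card_univ, Fintype.card_fin]

theorem two_mul_edges (R : SimpleGraph (Fin n)) :
    2 * R.edgeSet.ncard = adjPairs R (fun _ _ => True) := by
  classical
  have h := R.sum_degrees_eq_twice_card_edges
  have hnc : R.edgeSet.ncard = R.edgeFinset.card := by
    rw [← SimpleGraph.coe_edgeFinset, Set.ncard_coe_finset]
  rw [hnc, ← h, adjPairs_eq_sum]
  refine Finset.sum_congr rfl fun x _ => ?_
  rw [← SimpleGraph.card_neighborFinset_eq_degree]
  congr 1
  ext y
  simp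

/-- In `G ∖ H` the `i`-th vertex of the Pósa ordering has degree at least
`(min(i, n/2) + 3εn/2)p`: for `i ≥ n/2` the degree of `v_i` in `H` is bounded by that of the last
vertex which the Pósa condition controls. -/
theorem le_deg_sdiff {p ε g : ℝ} {G H : SimpleGraph (Fin n)} (hp : 0 ≤ p) (hε : 0 < ε)
    (hg1 : g = ε / 8) (hn : 3 ≤ n) (hεn : 16 ≤ ε * n) (hHG : H ≤ G)
    (hG : ∀ v, (1 - g) * p * (n - 1) ≤ deg G v) {v : Fin n → Fin n}
    (hanti : ∀ i j : Fin n, i ≤ j → deg H (v j) ≤ deg H (v i))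
    (hH : ∀ i : Fin n, ((i.1 : ℝ) + 1) < n / 2 →
      (deg H (v i) : ℝ) ≤ ((n : ℝ) - ((i.1 : ℝ) + 1)) * p - 2 * ε * n * p) (i : Fin n) :
    (min ((i : ℝ) + 1) (n / 2) + 3 / 2 * ε * n) * p ≤ deg (G \ H) (v i) := by
  have h1 : (deg (G \ H) (v i) : ℝ) + deg H (v i) = deg G (v i) := by
    exact_mod_cast deg_sdiff_add hHG (v i)
  have h2 := hG (v i)
  have h3 : (deg H (v i) : ℝ) ≤
      ((n : ℝ) - min ((i : ℝ) + 1) (n / 2) + 1) * p - 2 * ε * n * p := by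
    by_cases hi : (i : ℝ) + 1 < n / 2
    · rw [min_eq_left hi.le]
      have := hH i hi
      linarith
    · rw [min_eq_right (not_lt.1 hi)]
      obtain ⟨j, hj1, hj2⟩ : ∃ j : ℕ, 2 * (j + 1) < n ∧ n ≤ 2 * (j + 1) + 2 :=
        ⟨(n + 1) / 2 - 2, by omega, by omega⟩
      have hj1' : ((j : ℝ) + 1) < n / 2 := by
        have : (2 * ((j : ℝ) + 1)) < n := by exact_mod_cast hj1
        linarith
      have hj2' : (n : ℝ) / 2 ≤ (j : ℝ) + 1 + 1 := by
        have : (n : ℝ) ≤ 2 * ((j : ℝ) + 1) + 2 := by exact_mod_cast hj2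
        linarith
      have hjn : j < n := by omega
      have hji : (⟨j, hjn⟩ : Fin n) ≤ i := by
        rw [Fin.le_def]
        have : (j : ℝ) ≤ i := by linarith
        exact_mod_cast this
      have h4 : (deg H (v i) : ℝ) ≤ deg H (v ⟨j, hjn⟩) := by exact_mod_cast hanti _ _ hji
      have h5 := hH ⟨j, hjn⟩ hj1'
      simp only at h5
      nlinarith
  have h6 : (1 - g) * p * (n - 1) ≥ (n - 1 - g * n) * p := by
    have : 0 ≤ g * p := by rw [hg1]; positivity
    nlinarith
  have h7 : (2 + g * n) * p ≤ (1 / 2 * ε * n) * p := by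
    apply mul_le_mul_of_nonneg_right _ hp
    rw [hg1]; nlinarith
  nlinarith

open Classical in
theorem degrees_of_le_deg {r ε : ℝ} {R : SimpleGraph (Fin n)} (hr : 0 < r) {v : Fin n → Fin n}
    (hv : Function.Bijective v)
    (hR : ∀ i : Fin n, r * (min ((i : ℝ) + 1) (n / 2) + ε * n) ≤ deg R (v i))
    (s : ℝ) (hs0 : 0 ≤ s) (hsn : s ≤ n / 2) :
    ((Finset.univ.filter fun v => (deg R v : ℝ) < r * (s + ε * n)).card : ℝ) ≤ s := by
  have h1 : (Finset.univ.filter fun v => (deg R v : ℝ) < r * (s + ε * n)).card ≤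
      (Finset.range ⌊s⌋₊).card := by
    let e := Equiv.ofBijective v hv
    refine Finset.card_le_card_of_injOn (fun w => (e.symm w : ℕ)) ?_ ?_
    · intro w hw
      simp only [Finset.coe_filter, Finset.mem_univ, true_and, Set.mem_ofPred_eq] at hw
      have h2 := hR (e.symm w)
      have h3 : v (e.symm w) = w := e.apply_symm_apply w
      rw [h3] at h2
      have h4 := lt_of_mul_lt_mul_left (h2.trans_lt hw) hr.le
      have h5 : min (((e.symm w : Fin n) : ℝ) + 1) (n / 2) < s := by linarith
      rcases min_lt_iff.1 h5 with h6 | h6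
      · simp only [Finset.coe_range, Set.mem_Iio]
        rw [← Nat.succ_le_iff, Nat.le_floor_iff hs0]
        push_cast
        exact h6.le
      · linarith
    · intro w _ w' _ h
      exact e.symm.injective (Fin.ext h)
  rw [Finset.card_range] at h1
  exact (Nat.cast_le.2 h1).trans (Nat.floor_le hs0)

set_option maxHeartbeats 400000 in
/-- The probability bound for a fixed `n`, under explicit numerical assumptions on the
parameters. -/
theorem prob_bound {p ε δ g β γ : ℝ} {k L t₁ t₂ c : ℕ}
    (hp0 : 0 < p) (hp1 : p ≤ 1) (hε : 0 < ε) (hε1 : ε ≤ 1) (hδ : 0 < δ) (hδ1 : δ ≤ 1)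
    (hg : g = ε / 8) (hβ : β = ε / 56) (hγ : γ = β * ε / 16)
    (hn : 4 ≤ n) (hεn : 16 ≤ ε * n) (hlog : 1 ≤ log n) (hkc : (k : ℝ) ≤ 2 * c * log n)
    (h₁ : 2 * log n ≤ p * n * (g ^ 2 / 8)) (h₂ : 2 * log n ≤ δ * ε * (p * n) * (g ^ 2 / 4))
    (h₃ : 10 * log n ≤ ε / 4 * (n * (p * δ)))
    (h₄ : (16 * c + 3) * log n ≤ n * (p * δ) * (γ ^ 2 / 16))
    (hL : 0 < L) (hkL : n ≤ k * L) (ht₁ : n < 2 ^ t₁) (ht₂ : 2 ≤ t₂ * ε)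
    (hτ : (2 * k + 1 + (t₁ + t₂) * L : ℝ) ≤ ε / 4 * n) :
    1 - 9 / n ≤ Pr n p (fun G =>
      ∀ H : SimpleGraph (Fin n), H ≤ G → PosaFamily n p (2 * ε) H →
        ∃ R : SimpleGraph (Fin n), R ≤ G \ H ∧
          (R.edgeSet.ncard : ℝ) ≤ δ * n^2 * p ∧ RE n (1/2 + ε/4) R) := by
  have hn0 : (0:ℝ) < n := by exact_mod_cast (by omega : 0 < n)
  have hn4 : (4:ℝ) ≤ n := by exact_mod_cast hn
  have hr : 0 < p * δ := mul_pos hp0 hδ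
  have hg0 : 0 ≤ g := by rw [hg]; positivity
  have hg1 : g ≤ 1 := by rw [hg]; linarith
  have hβ0 : 0 < β := by rw [hβ]; positivity
  have hβ1 : β ≤ 1 := by rw [hβ]; linarith
  have hγ0 : 0 < γ := by rw [hγ]; positivity
  have hγ1 : γ ≤ 1 := by rw [hγ]; nlinarith
  have hexp : exp (-log n) = 1 / n := by rw [exp_neg, exp_log hn0, one_div]
  have hexp2 : n * exp (-(2 * log n)) = 1 / n := by
    have : exp (-(2 * log n)) = exp (-log n) * exp (-log n) := by
      rw [← exp_add]; congr 1; ring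
    rw [this, hexp]
    field_simp
  have hB : Pr n p (fun G => ∃ v, (deg (⊤ ⊓ G) v : ℝ) < (1 - g) * p * deg ⊤ v) ≤ 1 / n := by
    refine (deg_tail hp0.le hp1 hg0 hg1 ⊤).trans ?_
    rw [← hexp2]
    refine (Finset.sum_le_card_nsmul _ _ (exp (-(2 * log n))) ?_).trans ?_
    · intro v _
      rw [exp_le_exp, deg_top, Nat.cast_sub (by omega)]
      push_cast
      have : p * n * (g ^ 2 / 8) ≤ p * (n - 1) * (g ^ 2 / 4) := by
        have : 0 ≤ p * (g ^ 2 / 8) := by positivity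
        nlinarith
      linarith
    · simp
  have hlab : Ex n p (fun G => Pr n δ (fun Q => LabelBad n (p * δ) γ k (G ⊓ Q))) ≤ 2 / n := by
    refine (labelBad_tail k hp0.le hp1 hδ.le hδ1 hγ0.le hγ1).trans ?_
    have : exp (2 * (4 * k + 1) * n - n ^ 2 * (p * δ) * (γ ^ 2 / 16)) ≤ 1 / n := by
      rw [← hexp, exp_le_exp]
      have h5 := mul_le_mul_of_nonneg_left h₄ hn0.le
      have h6 : 2 * (4 * (k : ℝ) + 1) ≤ (16 * c + 2) * log n := by linarith
      have h7 := mul_le_mul_of_nonneg_left h6 hn0.le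
      nlinarith
    calc _ ≤ 2 * (1 / (n : ℝ)) := by gcongr
      _ = 2 / n := by ring
  have hsmall : Ex n p (fun G => Pr n δ (fun Q => SmallBad n (p * δ) ε β (G ⊓ Q))) ≤ 2 / n := by
    refine (smallBad_tail hp0.le hp1 hδ.le hδ1 hβ0.le (by rw [hβ]; linarith)).trans ?_
    refine (Finset.sum_le_card_nsmul _ _ (2 * exp (-(2 * log n))) ?_).trans ?_
    · intro x _
      have h5 : (n : ℝ) ^ (8 * ((x : ℕ) + 1)) = exp (8 * ((x : ℕ) + 1) * log n) := by
        have := exp_nat_mul (log n) (8 * ((x : ℕ) + 1))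
        rw [exp_log hn0] at this
        rw [← this]
        push_cast
        rfl
      rw [h5, ← exp_add]
      have h6 : 10 * log n * ((x : ℕ) + 1) ≤ ε / 4 * (n * (p * δ)) * ((x : ℕ) + 1) := by gcongr
      have h7 : (0:ℝ) ≤ (x : ℕ) := by positivity
      gcongr
      nlinarith
    · rw [Finset.card_univ, Fintype.card_fin, nsmul_eq_mul]
      apply le_of_eq
      calc (n : ℝ) * (2 * exp (-(2 * log n))) = 2 * (n * exp (-(2 * log n))) := by ring
        _ = 2 / n := by rw [hexp2]; ring
  refine le_trans ?_ (one_sub_le_Pr hp0.le hp1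
    (B := fun G => ∃ v, (deg (⊤ ⊓ G) v : ℝ) < (1 - g) * p * deg ⊤ v)
    (f := fun G => Pr n δ (fun Q => LabelBad n (p * δ) γ k (G ⊓ Q)) +
      Pr n δ (fun Q => SmallBad n (p * δ) ε β (G ⊓ Q))) ?_ ?_)
  · rw [Ex_add]
    have : (9:ℝ) / n = 1 / n + 2 * (2 / n + 2 / n) := by ring
    linarith
  · exact fun G => add_nonneg (Pr_nonneg hδ.le hδ1 _) (Pr_nonneg hδ.le hδ1 _)
  intro G hG hf H hHG hH
  obtain ⟨v, hv, hanti, hdeg⟩ := hH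
  push Not at hG
  have hG' : ∀ v, (1 - g) * p * (n - 1) ≤ deg G v := by
    intro v
    have := hG v
    rw [top_inf_eq, deg_top, Nat.cast_sub (by omega)] at this
    simpa using this
  have hD := le_deg_sdiff hp0.le hε hg (by omega) hεn hHG hG' hanti hdeg
  have hDlow : ∀ w, ε * n * p ≤ deg (G \ H) w := by
    intro w
    obtain ⟨i, rfl⟩ := hv.2 w
    refine le_trans ?_ (hD i)
    gcongr
    have : 0 ≤ min ((i : ℝ) + 1) (n / 2) := by positivity
    have : 0 < ε * n := by positivity
    linarith
  have hdegR : Pr n δ (fun Q => ∃ v, (deg ((G \ H) ⊓ Q) v : ℝ) < (1 - g) * δ * deg (G \ H) v) ≤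
      1 / n := by
    refine (deg_tail hδ.le hδ1 hg0 hg1 _).trans ?_
    rw [← hexp2]
    refine (Finset.sum_le_card_nsmul _ _ (exp (-(2 * log n))) ?_).trans ?_
    · intro w _
      rw [exp_le_exp]
      have : δ * (ε * n * p) * (g ^ 2 / 4) ≤ δ * deg (G \ H) w * (g ^ 2 / 4) := by
        gcongr
        exact hDlow w
      linarith
    · simp
  have hn14 : 1 / (n : ℝ) ≤ 1 / 4 := by gcongr
  obtain ⟨Q, hQ1, hQ2, hQ3⟩ := exists_of_Pr_add_lt hδ.le hδ1
    (A := fun Q => LabelBad n (p * δ) γ k (G ⊓ Q)) (B := fun Q => SmallBad n (p * δ) ε β (G ⊓ Q))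
    (D := fun Q => ∃ v, (deg ((G \ H) ⊓ Q) v : ℝ) < (1 - g) * δ * deg (G \ H) v)
    (by linarith)
  push Not at hQ3
  set R := (G \ H) ⊓ Q with hR
  have hRF : R ≤ G ⊓ Q := inf_le_inf_right _ sdiff_le
  have hlabels := labels_of_not_labelBad hr.le hRF hQ1
  have hgood : Good n (p * δ) ε β γ k R := by
    refine ⟨degrees_of_le_deg hr hv fun i => ?_, small_of_not_smallBad hr hε hRF hQ2, hlabels⟩
    refine le_trans ?_ (hQ3 (v i))
    have h5 : (1 - g) * δ * ((min ((i : ℝ) + 1) (n / 2) + 3 / 2 * ε * n) * p) ≤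
        (1 - g) * δ * deg (G \ H) (v i) := by
      have : 0 ≤ (1 - g) * δ := mul_nonneg (by linarith) hδ.le
      gcongr
      exact hD i
    refine le_trans ?_ h5
    have h6 : min ((i : ℝ) + 1) (n / 2) ≤ n / 2 := min_le_right _ _
    set m := min ((i : ℝ) + 1) (n / 2)
    have h7 : m + ε * n ≤ (1 - g) * (m + 3 / 2 * ε * n) := by
      have h8 : g * m ≤ g * (n / 2) := by gcongr
      have h9 : g * (3 / 2 * ε * n) ≤ g * (3 / 2 * 1 * n) := by gcongr
      have h10 : g * n = ε * n / 8 := by rw [hg]; ring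
      nlinarith
    calc p * δ * (m + ε * n) ≤ p * δ * ((1 - g) * (m + 3 / 2 * ε * n)) := by gcongr
      _ = _ := by ring
  refine ⟨R, inf_le_left, ?_, ?_⟩
  · have h5 := hlabels (fun _ => none) (fun _ => Finset.univ)
    simp only [Finset.mem_univ] at h5
    rw [← two_mul_edges] at h5
    push_cast at h5
    have h6 : (allPairs (fun _ _ : Fin n => True) : ℝ) ≤ n ^ 2 := by
      exact_mod_cast allPairs_le_sq _
    have h7 := mul_le_mul_of_nonneg_left h6 hr.le
    have h8 : γ * (n ^ 2 * (p * δ)) ≤ 1 * (n ^ 2 * (p * δ)) := by gcongr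
    nlinarith
  · exact hgood.re (by omega) hr hβ0 (by rw [hβ]; linarith) hβ1 hγ.le hε1 hL hkL ht₁ ht₂ hτ

end

/-- Lemma 4.9.  For all `0 < ε, δ ≤ 1` there exists `C > 0` such
that, for `p ≥ C log n / n`, a.a.s. for every `H ∈ H^{2ε}_{n,p}(G)` the graph `G ∖ H`
contains a subgraph with at most `δn²p` edges satisfying `RE(1/2 + ε/4)`. -/
theorem sparse_RE_subgraph (ε δ : ℝ) (hε : 0 < ε) (hε1 : ε ≤ 1) (hδ : 0 < δ)
    (hδ1 : δ ≤ 1) :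
    ∃ C : ℝ, 0 < C ∧ ∀ η : ℝ, 0 < η → ∃ N : ℕ, ∀ n : ℕ, N ≤ n →
      ∀ p : ℝ, C * Real.log n / n ≤ p → p ≤ 1 →
        1 - η ≤ Pr n p (fun G =>
          ∀ H : SimpleGraph (Fin n), H ≤ G → PosaFamily n p (2 * ε) H →
            ∃ R : SimpleGraph (Fin n), R ≤ G \ H ∧
              (R.edgeSet.ncard : ℝ) ≤ δ * n^2 * p ∧ RE n (1/2 + ε/4) R) := by
  set g : ℝ := ε / 8 with hg
  set β : ℝ := ε / 56 with hβ
  set γ : ℝ := β * ε / 16 with hγ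
  obtain ⟨c, hc⟩ := exists_nat_ge (16 / ε)
  have hc' : 16 ≤ c * ε := by rwa [div_le_iff₀ hε] at hc
  have hc0 : 0 < c := by
    rcases Nat.eq_zero_or_pos c with rfl | h
    · norm_num at hc'
    · exact h
  obtain ⟨t₂, ht₂⟩ := exists_nat_ge (2 / ε)
  have ht₂' : 2 ≤ t₂ * ε := by rwa [div_le_iff₀ hε] at ht₂
  have hg0 : 0 < g := by positivity
  have hβ0 : 0 < β := by positivity
  have hγ0 : 0 < γ := by positivity
  -- `C` is large enough for each of the four union bounds
  have lin : ∀ a b : ℝ, 0 < a → ∀ᶠ C : ℝ in atTop, b ≤ C * a := fun a b ha =>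
    (tendsto_id.atTop_mul_const ha).eventually_ge_atTop b
  obtain ⟨C, hC0, hC1, hC2, hC3, hC4⟩ := ((eventually_gt_atTop (0:ℝ)).and
    ((lin (g ^ 2 / 8) 2 (by positivity)).and ((lin (δ * ε * (g ^ 2 / 4)) 2 (by positivity)).and
    ((lin (ε / 4 * δ) 10 (by positivity)).and
      (lin (δ * (γ ^ 2 / 16)) (16 * c + 3) (by positivity)))))).exists
  refine ⟨C, hC0, fun η hη => ?_⟩
  have e1 : ∀ᶠ n : ℕ in atTop, 16 ≤ ε * n :=
    (tendsto_natCast_atTop_atTop.const_mul_atTop hε).eventually_ge_atTop 16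
  have e2 : ∀ᶠ n : ℕ in atTop, 1 ≤ log n :=
    (tendsto_log_atTop.comp tendsto_natCast_atTop_atTop).eventually_ge_atTop 1
  have e3 : ∀ᶠ n : ℕ in atTop, 9 ≤ η * n :=
    (tendsto_natCast_atTop_atTop.const_mul_atTop hη).eventually_ge_atTop 9
  have e4 : ∀ᶠ n : ℕ in atTop, log n ≤ ε / (16 * (2 * c + 3)) * n := by
    have h1 := (isLittleO_log_id_atTop.comp_tendsto tendsto_natCast_atTop_atTop).def
      (c := ε / (16 * (2 * c + 3))) (by positivity)
    filter_upwards [h1] with n hn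
    simp only [Function.comp, id, norm_eq_abs, Nat.abs_cast] at hn
    exact (le_abs_self _).trans hn
  obtain ⟨N, hN⟩ := eventually_atTop.1 (e1.and (e2.and (e3.and (e4.and
    ((eventually_ge_atTop 4).and (eventually_ge_atTop (2 ^ (1 + t₂))))))))
  refine ⟨N, fun n hn p hCp hp1 => ?_⟩
  obtain ⟨hεn, hlog, hηn, hlogn, hn4, hnt⟩ := hN n hn
  have hn0 : (0:ℝ) < n := by exact_mod_cast (by omega : 0 < n)
  have hpn : C * log n ≤ p * n := by rwa [div_le_iff₀ hn0] at hCp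
  have hp0 : 0 < p := lt_of_lt_of_le (by positivity) hCp
  -- the number of rounds in the first phase, logarithmic in `n`
  set l := Nat.log 2 n with hl
  have hl1 : 1 + t₂ ≤ l := (Nat.le_log_iff_pow_le (by norm_num) (by omega)).2 hnt
  have hl0 : 0 < l := by omega
  have hll : (l : ℝ) ≤ 2 * log n := by
    have h1 : 2 ^ l ≤ n := Nat.pow_log_le_self 2 (by omega)
    have h2 : ((2:ℝ) ^ l) ≤ n := by exact_mod_cast h1
    have h3 := log_le_log (by positivity) h2
    rw [log_pow] at h3
    have h4 := log_two_gt_d9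
    have h5 : (0:ℝ) ≤ l := by positivity
    nlinarith
  have hkpos : 0 < c * l := Nat.mul_pos hc0 hl0
  have key := prob_bound (n := n) (p := p) (ε := ε) (δ := δ) (g := g) (β := β) (γ := γ)
    (k := c * l) (L := n / (c * l) + 1) (t₁ := l + 1) (t₂ := t₂) (c := c)
    hp0 hp1 hε hε1 hδ hδ1 hg hβ hγ hn4 hεn hlog ?_ ?_ ?_ ?_ ?_ (Nat.succ_pos _) ?_
    (Nat.lt_pow_succ_log_self (by norm_num) n) ht₂' ?_
  · refine le_trans ?_ key
    have : 9 / (n : ℝ) ≤ η := by rwa [div_le_iff₀ hn0]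
    linarith
  · push_cast
    have : (0:ℝ) ≤ c := by positivity
    nlinarith
  · calc 2 * log n ≤ (C * (g ^ 2 / 8)) * log n := by gcongr
      _ = C * log n * (g ^ 2 / 8) := by ring
      _ ≤ _ := by gcongr
  · calc 2 * log n ≤ (C * (δ * ε * (g ^ 2 / 4))) * log n := by gcongr
      _ = δ * ε * (C * log n) * (g ^ 2 / 4) := by ring
      _ ≤ _ := by gcongr
  · calc 10 * log n ≤ (C * (ε / 4 * δ)) * log n := by gcongr
      _ = ε / 4 * δ * (C * log n) := by ring
      _ ≤ ε / 4 * δ * (p * n) := by gcongr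
      _ = _ := by ring
  · calc (16 * c + 3) * log n ≤ (C * (δ * (γ ^ 2 / 16))) * log n := by gcongr
      _ = δ * (γ ^ 2 / 16) * (C * log n) := by ring
      _ ≤ δ * (γ ^ 2 / 16) * (p * n) := by gcongr
      _ = _ := by ring
  · exact (Nat.lt_mul_div_succ n hkpos).le
  · push_cast
    have hl0' : (0:ℝ) < l := by exact_mod_cast hl0
    have hc0' : (0:ℝ) < c := by exact_mod_cast hc0
    have hL : ((n / (c * l) : ℕ) : ℝ) ≤ n / (c * l) := by
      have := Nat.cast_div_le (α := ℝ) (m := n) (n := c * l)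
      push_cast at this
      exact this
    have h1 : ((l : ℝ) + 1 + t₂) ≤ 2 * l := by
      have : (1 + (t₂ : ℝ)) ≤ l := by exact_mod_cast hl1
      linarith
    have h2 : ((l : ℝ) + 1 + t₂) * (((n / (c * l) : ℕ) : ℝ) + 1) ≤ 2 * l * (n / (c * l) + 1) := by
      gcongr
    have h3 : 2 * (l : ℝ) * (n / (c * l) + 1) = 2 * (n / c) + 2 * l := by field_simp
    have h4 : (n : ℝ) / c ≤ ε / 16 * n := by
      rw [div_le_iff₀ hc0']
      nlinarith
    have h5 : (2 * c + 3) * (l : ℝ) ≤ ε / 8 * n := by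
      calc (2 * c + 3) * (l : ℝ) ≤ (2 * c + 3) * (2 * (ε / (16 * (2 * c + 3)) * n)) := by
            gcongr; linarith
        _ = ε / 8 * n := by field_simp; norm_num
    have h6 : (1:ℝ) ≤ l := by exact_mod_cast hl0
    have h7 : (2 * c + 3) * (l : ℝ) = 2 * (c * l) + 3 * l := by ring
    linarith

end Resilience
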